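/- For every ε > 0, the number of GL₂(ℤ)-orbits of binary quartic forms f ∈ V(ℤ) with Δ(f) ≠ 0 and H(f) < X whose stabilizer in PGL₂(ℚ) (under the twisted action) is nontrivial is O_ε(X^{2/3+ε}). -/

import Mathlib

noncomputable section

namespace BQPaper

/-- A binary quartic form `a x⁴ + b x³y + c x²y² + d xy³ + e y⁴` over `R`,
recorded by its coefficients. -/
structure BQ (R : Type*) where
  a : R
  b : R
  c : R
  d : R
  e : R

/-- A 2×2 matrix `!![p, q; r, s]`, recorded by its entries. -/
structure Mat2 (R : Type*) where
  p : R
  q : R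
  r : R
  s : R

variable {R S : Type*} [CommRing R] [CommRing S]

def Mat2.det (m : Mat2 R) : R := m.p * m.s - m.q * m.r

/-- Matrix product. -/
def Mat2.mul (m n : Mat2 R) : Mat2 R :=
  ⟨m.p * n.p + m.q * n.r, m.p * n.q + m.q * n.s,
   m.r * n.p + m.s * n.r, m.r * n.q + m.s * n.s⟩

/-- Scalar multiple of a matrix. -/
def Mat2.smul (z : R) (m : Mat2 R) : Mat2 R := ⟨z * m.p, z * m.q, z * m.r, z * m.s⟩

def Mat2.map (φ : R →+* S) (m : Mat2 R) : Mat2 S := ⟨φ m.p, φ m.q, φ m.r, φ m.s⟩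

/-- Evaluation of a binary quartic form at `(x, y)`. -/
def BQ.eval (f : BQ R) (x y : R) : R :=
  f.a * x ^ 4 + f.b * x ^ 3 * y + f.c * x ^ 2 * y ^ 2 + f.d * x * y ^ 3 + f.e * y ^ 4

/-- The invariant `I(f) = 12ae − 3bd + c²`. -/
def BQ.invI (f : BQ R) : R := 12 * f.a * f.e - 3 * f.b * f.d + f.c ^ 2

/-- The invariant `J(f) = 72ace + 9bcd − 27ad² − 27eb² − 2c³`. -/
def BQ.invJ (f : BQ R) : R :=
  72 * f.a * f.c * f.e + 9 * f.b * f.c * f.d - 27 * f.a * f.d ^ 2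
    - 27 * f.e * f.b ^ 2 - 2 * f.c ^ 3

/-- The discriminant of a binary quartic form; one has `Δ = (4I³ − J²)/27`. -/
def BQ.disc (f : BQ R) : R :=
  256 * f.a ^ 3 * f.e ^ 3 - 192 * f.a ^ 2 * f.b * f.d * f.e ^ 2
    - 128 * f.a ^ 2 * f.c ^ 2 * f.e ^ 2 + 144 * f.a ^ 2 * f.c * f.d ^ 2 * f.e
    - 27 * f.a ^ 2 * f.d ^ 4 + 144 * f.a * f.b ^ 2 * f.c * f.e ^ 2
    - 6 * f.a * f.b ^ 2 * f.d ^ 2 * f.e - 80 * f.a * f.b * f.c ^ 2 * f.d * f.e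
    + 18 * f.a * f.b * f.c * f.d ^ 3 + 16 * f.a * f.c ^ 4 * f.e
    - 4 * f.a * f.c ^ 3 * f.d ^ 2 - 27 * f.b ^ 4 * f.e ^ 2
    + 18 * f.b ^ 3 * f.c * f.d * f.e - 4 * f.b ^ 3 * f.d ^ 3
    - 4 * f.b ^ 2 * f.c ^ 3 * f.e + f.b ^ 2 * f.c ^ 2 * f.d ^ 2

/-- Multiplication of all coefficients of a form by a scalar. -/
def BQ.rsmul (t : R) (f : BQ R) : BQ R := ⟨t * f.a, t * f.b, t * f.c, t * f.d, t * f.e⟩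

/-- Substitution action of a 2×2 matrix on binary quartic forms:
`(m • f)(x,y) = f((x,y)·m) = f(px + ry, qx + sy)` for `m = !![p, q; r, s]`. -/
def BQ.subst (m : Mat2 R) (f : BQ R) : BQ R where
  a := f.a * m.p ^ 4 + f.b * m.p ^ 3 * m.q + f.c * m.p ^ 2 * m.q ^ 2
      + f.d * m.p * m.q ^ 3 + f.e * m.q ^ 4
  b := 4 * f.a * m.p ^ 3 * m.r + f.b * m.p ^ 3 * m.s + 3 * f.b * m.p ^ 2 * m.q * m.r
      + 2 * f.c * m.p ^ 2 * m.q * m.s + 2 * f.c * m.p * m.q ^ 2 * m.r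
      + 3 * f.d * m.p * m.q ^ 2 * m.s + f.d * m.q ^ 3 * m.r + 4 * f.e * m.q ^ 3 * m.s
  c := 6 * f.a * m.p ^ 2 * m.r ^ 2 + 3 * f.b * m.p ^ 2 * m.r * m.s
      + 3 * f.b * m.p * m.q * m.r ^ 2 + f.c * m.p ^ 2 * m.s ^ 2
      + 4 * f.c * m.p * m.q * m.r * m.s + f.c * m.q ^ 2 * m.r ^ 2
      + 3 * f.d * m.p * m.q * m.s ^ 2 + 3 * f.d * m.q ^ 2 * m.r * m.s
      + 6 * f.e * m.q ^ 2 * m.s ^ 2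
  d := 4 * f.a * m.p * m.r ^ 3 + 3 * f.b * m.p * m.r ^ 2 * m.s + f.b * m.q * m.r ^ 3
      + 2 * f.c * m.p * m.r * m.s ^ 2 + 2 * f.c * m.q * m.r ^ 2 * m.s
      + f.d * m.p * m.s ^ 3 + 3 * f.d * m.q * m.r * m.s ^ 2 + 4 * f.e * m.q * m.s ^ 3
  e := f.a * m.r ^ 4 + f.b * m.r ^ 3 * m.s + f.c * m.r ^ 2 * m.s ^ 2
      + f.d * m.r * m.s ^ 3 + f.e * m.s ^ 4

/-- The twisted action `(γ·f)(x,y) = f((x,y)·γ)/det(γ)²`, which descends to `PGL₂`.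
(`Ring.inverse` is the genuine inverse when `det` is a unit.) -/
def BQ.twist (m : Mat2 R) (f : BQ R) : BQ R :=
  BQ.rsmul (Ring.inverse m.det ^ 2) (f.subst m)

/-- Coefficientwise map of forms along a ring homomorphism. -/
def BQ.map (φ : R →+* S) (f : BQ R) : BQ S := ⟨φ f.a, φ f.b, φ f.c, φ f.d, φ f.e⟩

end BQPaper

namespace BQPaper

/-- The height `H(I,J) = max(|I|³, J²/4)`. -/
def heightIJ (I J : ℝ) : ℝ := max (|I| ^ 3) (J ^ 2 / 4)

/-- The height of an integral binary quartic form. -/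
def BQ.height (f : BQ ℤ) : ℝ := heightIJ (f.invI : ℝ) (f.invJ : ℝ)

/-- `GL₂(ℤ)`-equivalence of integral binary quartic forms (substitution action). -/
def IntEquiv (f g : BQ ℤ) : Prop := ∃ m : Mat2 ℤ, IsUnit m.det ∧ g = f.subst m

/-- `f` has nontrivial stabiliser in `PGL₂(ℚ)` under the twisted action:  some matrix
in `GL₂(ℚ)` which is not a scalar fixes `f`. -/
def NontrivialStab (f : BQ ℤ) : Prop :=
  ∃ m : Mat2 ℚ, IsUnit m.det ∧
    (f.map (Int.castRingHom ℚ)).twist m = f.map (Int.castRingHom ℚ) ∧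
    ¬ ∃ z : ℚ, m = ⟨z, 0, 0, z⟩

/-- The forms counted in Statement 6: nonzero discriminant, height `< X`, and
nontrivial stabiliser in `PGL₂(ℚ)`. -/
def StabForms (X : ℝ) : Type _ :=
  {f : BQ ℤ // f.disc ≠ 0 ∧ f.height < X ∧ NontrivialStab f}

def stabFormsRel (X : ℝ) (f g : StabForms X) : Prop := IntEquiv f.val g.val

/-!
A nontrivial stabiliser of `f` produces a primitive binary quadratic form `Q`, of discriminant
`D ≠ 0`, which is an eigenvector, with eigenvalue `2t`, of the contraction of quadratic forms
against `f`. Then `t ^ 3 = 3 I t + J`, so `t = O(X^{1/6})` and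
`27 Δ = (4 I - t ^ 2) (I - t ^ 2) ^ 2`, and `D` divides the nonzero integer
`4 (I - t ^ 2) = O(X^{1/3})`.

Counting modulo `GL₂(ℤ)`, `Q` may be taken reduced. Given `t` and `m = 4 I - t ^ 2`, its
discriminant is one of `O(X^ε)` divisors, and its middle coefficient is `O(X^{1/6})` and leaves
`O(X^ε)` choices for the outer ones.

Given `Q`, `t` and `m`, the form `f` is determined by an element of norm `A ^ 4 m / 3` in `ℤ[√D]`,
on which the automorphs of `Q` act by fourth powers of solutions of the Pell equation. Up to these,
the element is determined in at most `8` ways by its class modulo `m / 3`, hence by a square root of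
`D` modulo `(m / 3) / c ^ 2` for some `c`. The number of square roots modulo `N` is `O(N^ε)` times
the sum of the `h` with `h ^ 2 ∣ N`, which is `O(X^ε)` on average over the `O(X^{1/3})` values of
`m`. In total there are `O(X^{1/6 + 1/3 + 1/6 + ε})` classes.
-/

attribute [ext] BQ Mat2

/-- A binary quadratic form `A x² + B xy + C y²` over `R`, recorded by its coefficients. -/
@[ext]
structure Quad (R : Type*) where
  A : R
  B : R
  C : R

section Covariance

variable {R S : Type*} [CommRing R] [CommRing S]

/-- The discriminant of a binary quadratic form. -/
def Quad.disc (Q : Quad R) : R := Q.B ^ 2 - 4 * Q.A * Q.C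

/-- Scalar multiple of a binary quadratic form. -/
def Quad.smul (z : R) (Q : Quad R) : Quad R := ⟨z * Q.A, z * Q.B, z * Q.C⟩

/-- Coefficientwise map of quadratic forms along a ring homomorphism. -/
def Quad.map (φ : R →+* S) (Q : Quad R) : Quad S := ⟨φ Q.A, φ Q.B, φ Q.C⟩

/-- The substitution action on quadratic forms, with the convention of `BQ.subst`:
`(m • Q)(x,y) = Q((x,y)·m)`. -/
def Quad.subst (m : Mat2 R) (Q : Quad R) : Quad R where
  A := Q.A * m.p ^ 2 + Q.B * m.p * m.q + Q.C * m.q ^ 2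
  B := 2 * Q.A * m.p * m.r + Q.B * (m.p * m.s + m.q * m.r) + 2 * Q.C * m.q * m.s
  C := Q.A * m.r ^ 2 + Q.B * m.r * m.s + Q.C * m.s ^ 2

/-- The contraction `C f_xx − B f_xy + A f_yy` of a quartic form `f` with a quadratic form
`A x² + B xy + C y²`. -/
def BQ.contract (f : BQ R) (Q : Quad R) : Quad R where
  A := 12 * f.a * Q.C - 3 * f.b * Q.B + 2 * f.c * Q.A
  B := 6 * f.b * Q.C - 4 * f.c * Q.B + 6 * f.d * Q.A
  C := 2 * f.c * Q.C - 3 * f.d * Q.B + 12 * f.e * Q.A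

/-- `Q` is an eigenform of the operator `f.contract`. The eigenvalue is written `2 * t`, which makes
`t` a root of the resolvent cubic `T³ − 3 I(f) T − J(f)`. -/
def IsEigen (f : BQ R) (Q : Quad R) (t : R) : Prop := f.contract Q = Q.smul (2 * t)

/-- The inverse matrix; as with `Ring.inverse`, it is only meaningful when `det` is a unit. -/
def Mat2.inv (m : Mat2 R) : Mat2 R := Mat2.smul (Ring.inverse m.det) ⟨m.s, -m.q, -m.r, m.p⟩

theorem Mat2.det_mul (m n : Mat2 R) : (m.mul n).det = m.det * n.det := by
  simp only [Mat2.det, Mat2.mul]; ring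

theorem Mat2.inv_mul {m : Mat2 R} (hm : IsUnit m.det) : m.inv.mul m = ⟨1, 0, 0, 1⟩ := by
  have h := Ring.inverse_mul_cancel _ hm
  ext <;> simp only [Mat2.inv, Mat2.mul, Mat2.smul]
  case p => rw [← h, Mat2.det]; ring
  case s => rw [← h, Mat2.det]; ring
  all_goals ring

theorem Mat2.isUnit_det_inv {m : Mat2 R} (hm : IsUnit m.det) : IsUnit m.inv.det := by
  refine IsUnit.of_mul_eq_one m.det ?_
  rw [← Mat2.det_mul, Mat2.inv_mul hm]
  simp [Mat2.det]

theorem BQ.subst_subst (f : BQ R) (m n : Mat2 R) : (f.subst m).subst n = f.subst (n.mul m) := by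
  ext <;> simp only [BQ.subst, Mat2.mul] <;> ring

theorem BQ.subst_one (f : BQ R) : f.subst ⟨1, 0, 0, 1⟩ = f := by
  ext <;> simp [BQ.subst]

theorem BQ.subst_subst_inv (f : BQ R) {m : Mat2 R} (hm : IsUnit m.det) :
    (f.subst m).subst m.inv = f := by
  rw [BQ.subst_subst, Mat2.inv_mul hm, BQ.subst_one]

theorem BQ.rsmul_subst (z : R) (f : BQ R) (m : Mat2 R) :
    (f.rsmul z).subst m = (f.subst m).rsmul z := by
  ext <;> simp only [BQ.subst, BQ.rsmul] <;> ring

theorem BQ.rsmul_rsmul (y z : R) (f : BQ R) : (f.rsmul z).rsmul y = f.rsmul (y * z) := by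
  ext <;> simp only [BQ.rsmul, mul_assoc]

theorem BQ.one_rsmul (f : BQ R) : f.rsmul 1 = f := by
  ext <;> simp only [BQ.rsmul, one_mul]

theorem BQ.twist_eq_self_iff {m : Mat2 R} (hm : IsUnit m.det) (f : BQ R) :
    f.twist m = f ↔ f.subst m = f.rsmul (m.det ^ 2) := by
  have h : m.det ^ 2 * Ring.inverse m.det ^ 2 = 1 := by
    rw [← mul_pow, Ring.mul_inverse_cancel _ hm, one_pow]
  rw [BQ.twist]
  constructor
  · intro hfix
    rw [← hfix, BQ.rsmul_rsmul, hfix, h, BQ.one_rsmul]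
  · intro hfix
    rw [hfix, BQ.rsmul_rsmul, mul_comm, h, BQ.one_rsmul]

theorem BQ.invI_subst (f : BQ R) (m : Mat2 R) : (f.subst m).invI = m.det ^ 4 * f.invI := by
  simp only [BQ.subst, Mat2.det, BQ.invI]; ring

theorem BQ.invJ_subst (f : BQ R) (m : Mat2 R) : (f.subst m).invJ = m.det ^ 6 * f.invJ := by
  simp only [BQ.subst, Mat2.det, BQ.invJ]; ring

theorem BQ.disc_eq (f : BQ R) : 27 * f.disc = 4 * f.invI ^ 3 - f.invJ ^ 2 := by
  simp only [BQ.disc, BQ.invI, BQ.invJ]; ring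

theorem BQ.disc_subst [NoZeroDivisors R] [CharZero R] (f : BQ R) (m : Mat2 R) :
    (f.subst m).disc = m.det ^ 12 * f.disc := by
  refine mul_left_cancel₀ (by norm_num : (27 : R) ≠ 0) ?_
  rw [mul_left_comm, BQ.disc_eq, BQ.disc_eq, BQ.invI_subst, BQ.invJ_subst]
  ring

theorem Quad.subst_subst (Q : Quad R) (m n : Mat2 R) :
    (Q.subst m).subst n = Q.subst (n.mul m) := by
  ext <;> simp only [Quad.subst, Mat2.mul] <;> ring

theorem Quad.subst_one (Q : Quad R) : Q.subst ⟨1, 0, 0, 1⟩ = Q := by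
  ext <;> simp [Quad.subst]

theorem Quad.disc_subst (Q : Quad R) (m : Mat2 R) :
    (Q.subst m).disc = m.det ^ 2 * Q.disc := by
  simp only [Quad.disc, Quad.subst, Mat2.det]; ring

theorem BQ.contract_subst (f : BQ R) (Q : Quad R) (m : Mat2 R) :
    (f.subst m).contract (Q.subst m) = ((f.contract Q).subst m).smul (m.det ^ 2) := by
  ext <;> simp only [BQ.contract, BQ.subst, Quad.subst, Quad.smul, Mat2.det] <;> ring

theorem IsEigen.subst {f : BQ R} {Q : Quad R} {t : R} (h : IsEigen f Q t) (m : Mat2 R) :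
    IsEigen (f.subst m) (Q.subst m) (m.det ^ 2 * t) := by
  rw [IsEigen, BQ.contract_subst, h]
  ext <;> simp only [Quad.subst, Quad.smul] <;> ring

theorem IsEigen.smul_resolvent {f : BQ R} {Q : Quad R} {t : R} (h : IsEigen f Q t) :
    Q.smul (8 * (t ^ 3 - 3 * f.invI * t - f.invJ)) = ⟨0, 0, 0⟩ := by
  obtain ⟨hA, hB, hC⟩ := Quad.ext_iff.1 h
  simp only [BQ.contract, Quad.smul] at hA hB hC
  -- `8 (t³ − 3It − J)` is the determinant of `2t - f.contract`, which is killed by multiplying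
  -- with the adjugate.
  ext <;> simp only [Quad.smul, BQ.invI, BQ.invJ]
  · linear_combination -2 * ((-2 * f.c - t) * (2 * f.c - 2 * t) + 9 * f.b * f.d) * hA
      - (6 * f.b * (f.c - t) - 36 * f.a * f.d) * hB
      + 2 * (9 * f.b ^ 2 - 12 * f.a * (2 * f.c + t)) * hC
  · linear_combination 2 * (3 * f.d * (2 * f.c - 2 * t) - 36 * f.b * f.e) * hA
      - ((2 * f.c - 2 * t) ^ 2 - 144 * f.a * f.e) * hB
      + 2 * (3 * f.b * (2 * f.c - 2 * t) - 36 * f.a * f.d) * hC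
  · linear_combination 2 * (9 * f.d ^ 2 - 12 * f.e * (2 * f.c + t)) * hA
      - (6 * f.d * (f.c - t) - 36 * f.b * f.e) * hB
      - 2 * ((2 * f.c - 2 * t) * (-2 * f.c - t) + 9 * f.b * f.d) * hC

theorem IsEigen.cubic [NoZeroDivisors R] [CharZero R] {f : BQ R} {Q : Quad R} {t : R}
    (h : IsEigen f Q t) (hQ : Q ≠ ⟨0, 0, 0⟩) : t ^ 3 = 3 * f.invI * t + f.invJ := by
  obtain ⟨hA, hB, hC⟩ := Quad.ext_iff.1 h.smul_resolvent
  by_contra hne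
  have hne' : 8 * (t ^ 3 - 3 * f.invI * t - f.invJ) ≠ 0 :=
    mul_ne_zero (by norm_num) fun h0 ↦ hne (by linear_combination h0)
  exact hQ (Quad.ext ((mul_eq_zero.1 hA).resolve_left hne') ((mul_eq_zero.1 hB).resolve_left hne')
    ((mul_eq_zero.1 hC).resolve_left hne'))

theorem IsEigen.disc_dvd_mul_sq_A {f : BQ R} {Q : Quad R} {t : R} (hf : IsEigen f Q t) :
    Q.disc ∣ 4 * (f.invI - t ^ 2) * Q.A ^ 2 := by
  obtain ⟨hA, hB, hC⟩ := Quad.ext_iff.1 hf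
  simp only [BQ.contract, Quad.smul] at hA hB hC
  refine ⟨8 * f.a * f.c - 3 * f.b ^ 2 + 4 * t * f.a, ?_⟩
  simp only [Quad.disc, BQ.invI]
  linear_combination 4 * f.a * Q.A * hC + 2 * (f.a * Q.B - f.b * Q.A) * hB
    + (2 * f.c * Q.A + 2 * t * Q.A - f.b * Q.B) * hA

/-- The third transvectant of `f` and `g`, up to a factor. -/
def BQ.transvectant (f g : BQ R) : Quad R where
  A := 2 * (f.a * g.d - g.a * f.d) - (f.b * g.c - g.b * f.c)
  B := 8 * (f.a * g.e - g.a * f.e) - (f.b * g.d - g.b * f.d)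
  C := 2 * (f.b * g.e - g.b * f.e) - (f.c * g.d - g.c * f.d)

/-- The commutator of `f.contract` and `g.contract` is the cross product with the transvectant of
`f` and `g`, so the transvectant is parallel to every common eigenform. -/
theorem IsEigen.transvectant_parallel [NoZeroDivisors R] [CharZero R] {f g : BQ R} {Q : Quad R}
    {t : R} (hf : IsEigen f Q t) (hg : IsEigen g Q t) :
    (f.transvectant g).A * Q.B = (f.transvectant g).B * Q.A ∧
      (f.transvectant g).A * Q.C = (f.transvectant g).C * Q.A := by
  obtain ⟨hA, hB, hC⟩ := Quad.ext_iff.1 hf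
  obtain ⟨hA', hB', hC'⟩ := Quad.ext_iff.1 hg
  simp only [BQ.contract, Quad.smul] at hA hB hC hA' hB' hC'
  simp only [BQ.transvectant]
  constructor
  · refine mul_left_cancel₀ (by norm_num : (18 : R) ≠ 0) ?_
    linear_combination -2 * t * (hA - hA') - (2 * f.c * hA' - 3 * f.b * hB' + 12 * f.a * hC')
      + (2 * g.c * hA - 3 * g.b * hB + 12 * g.a * hC)
  · refine mul_left_cancel₀ (by norm_num : (36 : R) ≠ 0) ?_
    linear_combination -2 * t * (hB - hB') - (6 * f.d * hA' - 4 * f.c * hB' + 6 * f.b * hC')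
      + (6 * g.d * hA - 4 * g.c * hB + 6 * g.b * hC)

end Covariance

section Stabiliser

variable {K : Type*} [Field K]

theorem trace_eq_zero_of_subst_companion [CharZero K] {f : BQ K} (hf : f.disc ≠ 0) {δ τ : K}
    (hδ : δ ≠ 0) (h : f.subst ⟨0, 1, -δ, τ⟩ = f.rsmul (δ ^ 2)) : τ = 0 := by
  obtain ⟨ha, hb, hc, hd, -⟩ := BQ.ext_iff.1 h
  simp only [BQ.subst, BQ.rsmul] at ha hb hc hd
  by_contra hτ
  have he' : f.e = δ ^ 2 * f.a := by linear_combination ha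
  have hd' : f.d = 2 * δ * f.a * τ := by
    refine mul_left_cancel₀ (mul_ne_zero hτ hδ) ?_
    linear_combination -hc / 3 + 2 * τ ^ 2 * ha
  have hb' : f.b = 2 * f.a * τ := by
    refine mul_left_cancel₀ (pow_ne_zero 2 hδ) ?_
    linear_combination -hb - δ * hd' + 4 * τ * ha
  have hc' : f.c = f.a * (2 * δ + τ ^ 2) := by
    refine mul_left_cancel₀ (mul_ne_zero (pow_ne_zero 2 hδ) hτ) ?_
    linear_combination hd / 2 + δ ^ 3 / 2 * hb' + (3 / 2 * δ * τ ^ 2 + δ ^ 2 / 2) * hd'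
      - 2 * τ ^ 3 * he'
  refine hf ?_
  rw [BQ.disc, he', hd', hb', hc']
  ring

theorem isEigen_of_subst_companion {f : BQ K} {δ : K} (hδ : δ ≠ 0)
    (h : f.subst ⟨0, 1, -δ, 0⟩ = f.rsmul (δ ^ 2)) : IsEigen f ⟨1, 0, δ⟩ (6 * f.a * δ + f.c) := by
  obtain ⟨ha, hb, -⟩ := BQ.ext_iff.1 h
  simp only [BQ.subst, BQ.rsmul] at ha hb
  have hd : f.d = -δ * f.b := by
    refine mul_left_cancel₀ hδ ?_
    linear_combination -hb
  rw [IsEigen]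
  ext <;> simp only [BQ.contract, Quad.smul]
  · ring
  · linear_combination 6 * hd
  · linear_combination 12 * ha

theorem exists_cyclic_vector {m : Mat2 K} (hm : ¬ ∃ z, m = ⟨z, 0, 0, z⟩) :
    ∃ v w : K, v * (v * m.q + w * m.s) - w * (v * m.p + w * m.r) ≠ 0 := by
  by_contra! hc
  have hq : m.q = 0 := by linear_combination hc 1 0
  have hr : m.r = 0 := by linear_combination -hc 0 1
  have hs : m.s = m.p := by linear_combination hc 1 1 - hq + hr
  exact hm ⟨m.p, by ext <;> simp [hq, hr, hs]⟩

theorem exists_mul_eq_companion_mul {m : Mat2 K} (hm : ¬ ∃ z, m = ⟨z, 0, 0, z⟩) :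
    ∃ g : Mat2 K, g.det ≠ 0 ∧ g.mul m = Mat2.mul ⟨0, 1, -m.det, m.p + m.s⟩ g := by
  obtain ⟨v, w, hvw⟩ := exists_cyclic_vector hm
  refine ⟨⟨v, w, v * m.p + w * m.r, v * m.q + w * m.s⟩, hvw, ?_⟩
  ext <;> simp only [Mat2.mul, Mat2.det] <;> ring

theorem exists_isEigen_of_twist_eq_self [CharZero K] {f : BQ K} (hf : f.disc ≠ 0) {m : Mat2 K}
    (hm : IsUnit m.det) (hfix : f.twist m = f) (hscalar : ¬ ∃ z, m = ⟨z, 0, 0, z⟩) :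
    ∃ Q t, Q.disc ≠ 0 ∧ IsEigen f Q t := by
  obtain ⟨g, hg, hconj⟩ := exists_mul_eq_companion_mul hscalar
  have hcomp : (f.subst g).subst ⟨0, 1, -m.det, m.p + m.s⟩ = (f.subst g).rsmul (m.det ^ 2) := by
    rw [BQ.subst_subst, ← hconj, ← BQ.subst_subst, (BQ.twist_eq_self_iff hm f).1 hfix,
      BQ.rsmul_subst]
  have hdisc : (f.subst g).disc ≠ 0 := by
    rw [BQ.disc_subst]
    exact mul_ne_zero (pow_ne_zero _ hg) hf
  rw [trace_eq_zero_of_subst_companion hdisc hm.ne_zero hcomp] at hcomp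
  have hback := (isEigen_of_subst_companion hm.ne_zero hcomp).subst g.inv
  rw [BQ.subst_subst_inv f hg.isUnit] at hback
  refine ⟨_, _, ?_, hback⟩
  rw [Quad.disc_subst]
  refine mul_ne_zero (pow_ne_zero _ (Mat2.isUnit_det_inv hg.isUnit).ne_zero) ?_
  simpa [Quad.disc] using hm.ne_zero

end Stabiliser

section Integrality

variable {R S : Type*} [CommRing R] [CommRing S]

/-- A quadratic form is primitive if its coefficients generate the unit ideal. -/
def Quad.IsPrimitive (Q : Quad R) : Prop := ∃ x y z, x * Q.A + y * Q.B + z * Q.C = 1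

theorem Quad.IsPrimitive.of_subst {Q : Quad R} {m : Mat2 R}
    (h : (Q.subst m).IsPrimitive) : Q.IsPrimitive := by
  obtain ⟨x, y, z, hxyz⟩ := h
  simp only [Quad.subst] at hxyz
  refine ⟨x * m.p ^ 2 + 2 * y * m.p * m.r + z * m.r ^ 2,
    x * m.p * m.q + y * (m.p * m.s + m.q * m.r) + z * m.r * m.s,
    x * m.q ^ 2 + 2 * y * m.q * m.s + z * m.s ^ 2, ?_⟩
  linear_combination hxyz

theorem Quad.IsPrimitive.subst {Q : Quad R} (h : Q.IsPrimitive) {m : Mat2 R}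
    (hm : IsUnit m.det) : (Q.subst m).IsPrimitive := by
  refine Quad.IsPrimitive.of_subst (m := m.inv) ?_
  rwa [Quad.subst_subst, Mat2.inv_mul hm, Quad.subst_one]

theorem BQ.disc_map (φ : R →+* S) (f : BQ R) : (f.map φ).disc = φ f.disc := by
  simp [BQ.map, BQ.disc, map_ofNat]

theorem BQ.invI_map (φ : R →+* S) (f : BQ R) : (f.map φ).invI = φ f.invI := by
  simp [BQ.map, BQ.invI, map_ofNat]

theorem BQ.invJ_map (φ : R →+* S) (f : BQ R) : (f.map φ).invJ = φ f.invJ := by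
  simp [BQ.map, BQ.invJ, map_ofNat]

theorem Quad.disc_map (φ : R →+* S) (Q : Quad R) : (Q.map φ).disc = φ Q.disc := by
  simp [Quad.map, Quad.disc, map_ofNat]

theorem Quad.disc_smul (z : R) (Q : Quad R) : (Q.smul z).disc = z ^ 2 * Q.disc := by
  simp only [Quad.smul, Quad.disc]; ring

theorem Quad.ne_zero_of_disc_ne_zero {Q : Quad R} (hQ : Q.disc ≠ 0) : Q ≠ ⟨0, 0, 0⟩ := by
  rintro rfl
  simp [Quad.disc] at hQ

theorem IsEigen.of_map {φ : R →+* S} (hφ : Function.Injective φ) {f : BQ R} {Q : Quad R} {t : R}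
    (h : IsEigen (f.map φ) (Q.map φ) (φ t)) : IsEigen f Q t := by
  obtain ⟨hA, hB, hC⟩ := Quad.ext_iff.1 h
  simp only [BQ.contract, BQ.map, Quad.map, Quad.smul] at hA hB hC
  ext <;> apply hφ <;> simpa [BQ.contract, Quad.smul, map_ofNat]

theorem isEigen_smul_iff [IsDomain R] {f : BQ R} {Q : Quad R} {t z : R} (hz : z ≠ 0) :
    IsEigen f (Q.smul z) t ↔ IsEigen f Q t := by
  have hcontract : f.contract (Q.smul z) = (f.contract Q).smul z := by
    ext <;> simp only [BQ.contract, Quad.smul] <;> ring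
  simp only [IsEigen, hcontract]
  simp only [Quad.smul, Quad.ext_iff, mul_left_comm _ z, mul_right_inj' hz]

theorem Quad.exists_isPrimitive_eq_smul [IsDomain R] [IsPrincipalIdealRing R] {Q : Quad R}
    (hQ : Q ≠ ⟨0, 0, 0⟩) : ∃ (P : Quad R) (g : R), P.IsPrimitive ∧ g ≠ 0 ∧ Q = P.smul g := by
  obtain ⟨g, hg⟩ := IsPrincipalIdealRing.principal (Ideal.span {Q.A, Q.B, Q.C})
  have hdvd {x : R} (hx : x ∈ ({Q.A, Q.B, Q.C} : Set R)) : g ∣ x :=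
    Ideal.mem_span_singleton.1 (hg.le (Ideal.subset_span hx))
  obtain ⟨A, hA⟩ := hdvd (x := Q.A) (by simp)
  obtain ⟨B, hB⟩ := hdvd (x := Q.B) (by simp)
  obtain ⟨C, hC⟩ := hdvd (x := Q.C) (by simp)
  have hg0 : g ≠ 0 := by
    rintro rfl
    exact hQ (by ext <;> simp [hA, hB, hC])
  obtain ⟨x, y, z, hxyz⟩ : ∃ x y z : R, x • Q.A + y • Q.B + z • Q.C = g :=
    Submodule.mem_span_triple.1 (hg.ge (Submodule.mem_span_singleton_self g))
  refine ⟨⟨A, B, C⟩, g, ⟨x, y, z, mul_left_cancel₀ hg0 ?_⟩, hg0, Quad.ext hA hB hC⟩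
  simp only [smul_eq_mul, hA, hB, hC] at hxyz
  linear_combination hxyz

theorem Quad.exists_map_eq_smul (Q : Quad ℚ) :
    ∃ (P : Quad ℤ) (k : ℚ), k ≠ 0 ∧ P.map (Int.castRingHom ℚ) = Q.smul k := by
  refine ⟨⟨Q.A.num * Q.B.den * Q.C.den, Q.A.den * Q.B.num * Q.C.den, Q.A.den * Q.B.den * Q.C.num⟩,
    Q.A.den * Q.B.den * Q.C.den, by simp, ?_⟩
  ext <;> simp only [Quad.map, Quad.smul, eq_intCast, Int.cast_mul, Int.cast_natCast,
    ← Rat.mul_den_eq_num] <;> ring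

theorem Quad.exists_isPrimitive_map_eq_smul {Q : Quad ℚ} (hQ : Q ≠ ⟨0, 0, 0⟩) :
    ∃ (P : Quad ℤ) (k : ℚ), P.IsPrimitive ∧ k ≠ 0 ∧ Q = (P.map (Int.castRingHom ℚ)).smul k := by
  obtain ⟨N, k, hk, hN⟩ := Q.exists_map_eq_smul
  have hN0 : N ≠ ⟨0, 0, 0⟩ := by
    rintro rfl
    refine hQ (Quad.ext ?_ ?_ ?_) <;> simp_all [Quad.map, Quad.smul, Quad.ext_iff]
  obtain ⟨P, g, hP, hg, rfl⟩ := Quad.exists_isPrimitive_eq_smul hN0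
  refine ⟨P, g / k, hP, div_ne_zero (Int.cast_ne_zero.2 hg) hk, ?_⟩
  simp only [Quad.map, Quad.smul, Quad.ext_iff, map_mul, eq_intCast] at hN ⊢
  obtain ⟨hA, hB, hC⟩ := hN
  refine ⟨?_, ?_, ?_⟩ <;> field_simp <;> linarith

theorem exists_int_eq_of_cubic {I J : ℤ} {t : ℚ} (h : t ^ 3 = 3 * I * t + J) :
    ∃ n : ℤ, (n : ℚ) = t := by
  refine IsIntegrallyClosed.isIntegral_iff.1
    ⟨Polynomial.X ^ 3 - (Polynomial.C (3 * I) * Polynomial.X + Polynomial.C J), ?_, ?_⟩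
  · refine Polynomial.monic_X_pow_sub ?_
    compute_degree!
  · simp only [Polynomial.eval₂_sub, Polynomial.eval₂_add, Polynomial.eval₂_mul,
      Polynomial.eval₂_pow, Polynomial.eval₂_X, Polynomial.eval₂_C]
    simp [h]

theorem NontrivialStab.exists_isEigen {f : BQ ℤ} (hf : f.disc ≠ 0) (hstab : NontrivialStab f) :
    ∃ (Q : Quad ℤ) (t : ℤ), Q.IsPrimitive ∧ Q.disc ≠ 0 ∧ IsEigen f Q t := by
  obtain ⟨m, hm, hfix, hscalar⟩ := hstab
  have hfℚ : (f.map (Int.castRingHom ℚ)).disc ≠ 0 := by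
    rw [BQ.disc_map]
    exact Int.cast_ne_zero.2 hf
  obtain ⟨Q, t, hQ, ht⟩ := exists_isEigen_of_twist_eq_self hfℚ hm hfix hscalar
  obtain ⟨P, k, hP, hk, rfl⟩ :=
    Quad.exists_isPrimitive_map_eq_smul (Quad.ne_zero_of_disc_ne_zero hQ)
  have hcubic := ht.cubic (Quad.ne_zero_of_disc_ne_zero hQ)
  rw [BQ.invI_map, BQ.invJ_map] at hcubic
  obtain ⟨n, rfl⟩ := exists_int_eq_of_cubic hcubic
  refine ⟨P, n, hP, fun h ↦ hQ ?_, ((isEigen_smul_iff hk).1 ht).of_map Int.cast_injective⟩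
  rw [Quad.disc_smul, Quad.disc_map, h, map_zero, mul_zero]

end Integrality

section Equivalence

theorem IntEquiv.refl (f : BQ ℤ) : IntEquiv f f :=
  ⟨⟨1, 0, 0, 1⟩, by simp [Mat2.det], f.subst_one.symm⟩

theorem IntEquiv.symm {f g : BQ ℤ} (h : IntEquiv f g) : IntEquiv g f := by
  obtain ⟨m, hm, rfl⟩ := h
  exact ⟨m.inv, Mat2.isUnit_det_inv hm, (f.subst_subst_inv hm).symm⟩

theorem IntEquiv.trans {f g h : BQ ℤ} (hfg : IntEquiv f g) (hgh : IntEquiv g h) :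
    IntEquiv f h := by
  obtain ⟨m, hm, rfl⟩ := hfg
  obtain ⟨n, hn, rfl⟩ := hgh
  exact ⟨n.mul m, by rw [Mat2.det_mul]; exact hn.mul hm, f.subst_subst m n⟩

instance : Setoid (BQ ℤ) := ⟨IntEquiv, IntEquiv.refl, IntEquiv.symm, IntEquiv.trans⟩

theorem BQ.invI_subst_of_isUnit (f : BQ ℤ) {m : Mat2 ℤ} (hm : IsUnit m.det) :
    (f.subst m).invI = f.invI := by
  rw [BQ.invI_subst, pow_mul (m := 2) (n := 2), Int.isUnit_sq hm]; ring

theorem Quad.disc_subst_of_isUnit (Q : Quad ℤ) {m : Mat2 ℤ} (hm : IsUnit m.det) :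
    (Q.subst m).disc = Q.disc := by
  rw [Quad.disc_subst, Int.isUnit_sq hm, one_mul]

theorem IsEigen.subst_of_isUnit {f : BQ ℤ} {Q : Quad ℤ} {t : ℤ} (h : IsEigen f Q t) {m : Mat2 ℤ}
    (hm : IsUnit m.det) : IsEigen (f.subst m) (Q.subst m) t := by
  simpa only [Int.isUnit_sq hm, one_mul] using h.subst m

end Equivalence

section Reduction

/-- A weak notion of reduced integral quadratic form, which allows square and zero discriminants:
it makes the forms of discriminant `D` finite in number, parametrised by `B` and a divisor
of `B` or of `(B² - D) / 4`. -/
structure Quad.IsReduced (Q : Quad ℤ) : Prop where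
  sq_B_le : Q.B ^ 2 ≤ |Q.disc|
  abs_C_le : Q.A = 0 → |Q.C| ≤ |Q.B|
  C_ne_zero : Q.A ≠ 0 → Q.C ≠ 0

theorem exists_abs_two_mul_add_le (A B : ℤ) (hA : A ≠ 0) : ∃ j : ℤ, |2 * A * j + B| ≤ |A| := by
  have := abs_pos.2 hA
  obtain ⟨j, hj⟩ : 2 * A ∣ (B + |A|) % (2 * |A|) - (B + |A|) := by
    rw [← abs_dvd, abs_mul, abs_two]
    exact (Int.mod_modEq _ _).symm.dvd
  have hlower := Int.emod_nonneg (B + |A|) (by positivity : 2 * |A| ≠ 0)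
  have hupper := Int.emod_lt_of_pos (B + |A|) (by positivity : 0 < 2 * |A|)
  exact ⟨j, abs_le.2 ⟨by linarith, by linarith⟩⟩

theorem Quad.isReduced_of_abs_le {Q : Quad ℤ} (hA : Q.A ≠ 0) (hBA : |Q.B| ≤ |Q.A|)
    (hAC : |Q.A| ≤ |Q.C|) : Q.IsReduced := by
  refine ⟨?_, fun h ↦ absurd h hA, fun _ hC ↦ ?_⟩
  · have hBB : Q.B ^ 2 ≤ |Q.A| * |Q.C| := by
      rw [← sq_abs, sq]
      exact mul_le_mul hBA (hBA.trans hAC) (abs_nonneg _) (abs_nonneg _)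
    have hdisc : 4 * (|Q.A| * |Q.C|) - Q.B ^ 2 ≤ |Q.disc| := by
      have h := abs_sub_abs_le_abs_sub (4 * Q.A * Q.C) (Q.B ^ 2)
      rw [abs_sub_comm, abs_mul, abs_mul, abs_of_nonneg (sq_nonneg Q.B)] at h
      simpa [Quad.disc, mul_assoc] using h
    linarith [sq_nonneg Q.B]
  · rw [hC, abs_zero] at hAC
    exact hA (abs_nonpos_iff.1 hAC)

theorem Quad.exists_minimal_subst (Q : Quad ℤ) :
    ∃ m : Mat2 ℤ, IsUnit m.det ∧
      ∀ n : Mat2 ℤ, IsUnit n.det → |(Q.subst m).A| ≤ |((Q.subst m).subst n).A| := by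
  obtain ⟨m, hm, hmin⟩ := WellFounded.has_min (measure fun m : Mat2 ℤ ↦ (Q.subst m).A.natAbs).wf
    {m | IsUnit m.det} ⟨⟨1, 0, 0, 1⟩, by simp [Mat2.det]⟩
  refine ⟨m, hm, fun n hn ↦ ?_⟩
  rw [Quad.subst_subst, Int.abs_eq_natAbs, Int.abs_eq_natAbs, Nat.cast_le]
  exact not_lt.1 (hmin (n.mul m) (by simpa only [Set.mem_ofPred, Mat2.det_mul] using hn.mul hm))

theorem Quad.exists_subst_isReduced {Q : Quad ℤ} (hQ : Q.disc ≠ 0) :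
    ∃ m : Mat2 ℤ, IsUnit m.det ∧ (Q.subst m).IsReduced := by
  obtain ⟨m, hm, hmin⟩ := Q.exists_minimal_subst
  rw [← Q.disc_subst_of_isUnit hm] at hQ
  generalize hP : Q.subst m = P at hQ hmin
  have hshift (j : ℤ) : P.subst ⟨1, 0, j, 1⟩ =
      ⟨P.A, 2 * P.A * j + P.B, P.A * j ^ 2 + P.B * j + P.C⟩ := by
    ext <;> simp only [Quad.subst] <;> ring
  suffices ∃ j, (P.subst ⟨1, 0, j, 1⟩).IsReduced by
    obtain ⟨j, hj⟩ := this
    refine ⟨Mat2.mul ⟨1, 0, j, 1⟩ m, ?_, by rwa [← Quad.subst_subst, hP]⟩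
    rw [Mat2.det_mul]
    exact IsUnit.mul (by simp [Mat2.det]) hm
  by_cases hA : P.A = 0
  · have hB : P.B ≠ 0 := by
      rintro hB
      simp [Quad.disc, hA, hB] at hQ
    refine ⟨-(P.C / P.B), ?_⟩
    rw [hshift, hA]
    refine ⟨?_, fun _ ↦ ?_, fun h ↦ absurd rfl h⟩
    · simp [Quad.disc]
    · have hmod : P.B * -(P.C / P.B) + P.C = P.C % P.B := by
        rw [Int.emod_def]; ring
      simp only [zero_mul, mul_zero, zero_add, hmod, abs_of_nonneg (Int.emod_nonneg P.C hB)]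
      exact (Int.emod_lt_abs P.C hB).le
  · obtain ⟨j, hj⟩ := exists_abs_two_mul_add_le P.A P.B hA
    have hswap := hmin (Mat2.mul ⟨0, 1, 1, 0⟩ ⟨1, 0, j, 1⟩) (by simp [Mat2.det, Mat2.mul])
    rw [← Quad.subst_subst, hshift] at hswap
    refine ⟨j, ?_⟩
    rw [hshift]
    exact Quad.isReduced_of_abs_le hA hj (by simpa [Quad.subst] using hswap)

end Reduction

section CoprimeValue

theorem exists_forall_prime_dvd_iff {M : ℤ} (hM : M ≠ 0) (P : ℕ → Prop) :
    ∃ x : ℤ, ∀ p : ℕ, p.Prime → (↑p ∣ x ↔ ↑p ∣ M ∧ P p) := by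
  classical
  refine ⟨∏ p ∈ M.natAbs.primeFactors with P p, (p : ℤ), fun p hp ↦ ?_⟩
  have hmem : (↑p ∣ M ∧ P p) ↔ p ∈ {p ∈ M.natAbs.primeFactors | P p} := by
    simp [hp, hM, Int.natCast_dvd]
  rw [hmem]
  refine ⟨fun hdvd ↦ ?_, Finset.dvd_prod_of_mem _⟩
  obtain ⟨q, hq, hpq⟩ := (Nat.prime_iff_prime_int.1 hp).exists_mem_finset_dvd hdvd
  have hqprime : q.Prime := Nat.prime_of_mem_primeFactors (Finset.mem_filter.1 hq).1
  rwa [(Nat.prime_dvd_prime_iff_eq hp hqprime).1 (Int.natCast_dvd_natCast.1 hpq)]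

theorem isCoprime_of_forall_natPrime {x y : ℤ}
    (h : ∀ p : ℕ, p.Prime → ↑p ∣ x → ¬ (↑p ∣ y)) : IsCoprime x y := by
  rw [Int.isCoprime_iff_gcd_eq_one]
  by_contra hgcd
  obtain ⟨p, hp, hdvd⟩ := Nat.exists_prime_and_dvd hgcd
  have hdvd : (p : ℤ) ∣ x.gcd y := Int.natCast_dvd_natCast.2 hdvd
  exact h p hp (hdvd.trans (Int.gcd_dvd_left ..)) (hdvd.trans (Int.gcd_dvd_right ..))

theorem Quad.IsPrimitive.exists_subst_isCoprime {Q : Quad ℤ} (hQ : Q.IsPrimitive) {M : ℤ}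
    (hM : M ≠ 0) : ∃ m : Mat2 ℤ, IsUnit m.det ∧ IsCoprime (Q.subst m).A M := by
  obtain ⟨X, hX⟩ := exists_forall_prime_dvd_iff hM fun p ↦ ↑p ∣ Q.A ∧ ¬ ↑p ∣ Q.C
  obtain ⟨Y, hY⟩ := exists_forall_prime_dvd_iff hM fun p ↦ ¬ ↑p ∣ Q.A
  have hXY : IsCoprime X Y := isCoprime_of_forall_natPrime fun p hp hpX hpY ↦
    ((hY p hp).1 hpY).2 ((hX p hp).1 hpX).2.1
  obtain ⟨u, v, huv⟩ := hXY
  refine ⟨⟨X, Y, -v, u⟩, ?_, isCoprime_of_forall_natPrime fun p hp hpA hpM ↦ ?_⟩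
  · rw [Mat2.det, show X * u - Y * -v = 1 by linear_combination huv]
    exact isUnit_one
  · have : Fact p.Prime := ⟨hp⟩
    have hXp := hX p hp
    have hYp := hY p hp
    obtain ⟨x, y, z, hxyz⟩ := hQ
    replace hxyz := congrArg (Int.cast : ℤ → ZMod p) hxyz
    simp only [hpM, true_and, ← ZMod.intCast_zmod_eq_zero_iff_dvd, Quad.subst] at hXp hYp hpA
    push_cast at hpA hxyz
    by_cases hA : (Q.A : ZMod p) = 0 <;> by_cases hC : (Q.C : ZMod p) = 0 <;> simp_all

end CoprimeValue

section NormForm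

/-- The coordinate `u + v√D` on the quartic forms having `Q`, of discriminant `D`, as an
eigenform with eigenvalue `2t`. If `Q = ξη` splits, such a form is `α ξ⁴ + β ξ²η² + α' η⁴`, where
`α` and `α'` are the two conjugates of the coordinate up to a common scalar, and `β` is determined
by `t`. -/
def eigenCoord (Q : Quad ℤ) (t : ℤ) (f : BQ ℤ) : ℤ√Q.disc :=
  ⟨t * Q.A ^ 2 + 2 * f.a * Q.disc, f.b * Q.A - 2 * f.a * Q.B⟩

/-- The automorph of `Q` attached to a solution `T² - D U² = 1` of the Pell equation of its
discriminant; it multiplies the roots of `Q` by `T ± U√D`. -/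
def Quad.automorph (Q : Quad ℤ) (w : Pell.Solution₁ Q.disc) : Mat2 ℤ :=
  ⟨w.x - Q.B * w.y, 2 * Q.A * w.y, -2 * Q.C * w.y, w.x + Q.B * w.y⟩

variable {f g : BQ ℤ} {Q : Quad ℤ} {t : ℤ}

theorem IsEigen.norm_eigenCoord (hf : IsEigen f Q t) :
    3 * (eigenCoord Q t f).norm = Q.A ^ 4 * (4 * f.invI - t ^ 2) := by
  obtain ⟨hA, hB, hC⟩ := Quad.ext_iff.1 hf
  simp only [BQ.contract, Quad.smul] at hA hB hC
  simp only [Zsqrtd.norm_def, eigenCoord, Quad.disc, BQ.invI]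
  linear_combination -4 * f.a * Q.A ^ 3 * hC - 2 * Q.A ^ 2 * (f.a * Q.B - f.b * Q.A) * hB
    - (Q.A ^ 2 * (2 * f.c * Q.A + 2 * t * Q.A - 12 * f.a * Q.C + 3 * f.b * Q.B)
      - 4 * f.a * Q.A ^ 2 * Q.C + 4 * Q.A * Q.B * (f.a * Q.B - f.b * Q.A)) * hA

theorem IsEigen.disc_dvd (hf : IsEigen f Q t) (hQ : Q.IsPrimitive) (hD : Q.disc ≠ 0) :
    Q.disc ∣ 4 * (f.invI - t ^ 2) := by
  obtain ⟨m, hm, hcop⟩ := hQ.exists_subst_isCoprime hD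
  have h := (hf.subst_of_isUnit hm).disc_dvd_mul_sq_A
  rw [Quad.disc_subst_of_isUnit Q hm, BQ.invI_subst_of_isUnit f hm] at h
  exact hcop.symm.pow_right.dvd_of_dvd_mul_right h

theorem IsEigen.im_star_mul_eq (hf : IsEigen f Q t) (hg : IsEigen g Q t) :
    (star (eigenCoord Q t f) * eigenCoord Q t g).im = Q.A ^ 3 * (f.transvectant g).A := by
  obtain ⟨hA, hB, -⟩ := Quad.ext_iff.1 hf
  obtain ⟨hA', hB', -⟩ := Quad.ext_iff.1 hg
  simp only [BQ.contract, Quad.smul] at hA hB hA' hB'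
  refine mul_left_cancel₀ (by norm_num : (6 : ℤ) ≠ 0) ?_
  simp only [Zsqrtd.im_mul, Zsqrtd.re_star, Zsqrtd.im_star]
  simp only [eigenCoord, BQ.transvectant, Quad.disc]
  linear_combination -2 * f.a * Q.A ^ 2 * hB' + 2 * g.a * Q.A ^ 2 * hB
    - (4 * f.a * Q.A * Q.B - 3 * f.b * Q.A ^ 2) * hA'
    + (4 * g.a * Q.A * Q.B - 3 * g.b * Q.A ^ 2) * hA

theorem IsEigen.pow_dvd_im_star_mul (hf : IsEigen f Q t) (hg : IsEigen g Q t)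
    (hQ : Q.IsPrimitive) : Q.A ^ 4 ∣ (star (eigenCoord Q t f) * eigenCoord Q t g).im := by
  obtain ⟨x, y, z, hxyz⟩ := hQ
  obtain ⟨hB, hC⟩ := hf.transvectant_parallel hg
  rw [hf.im_star_mul_eq hg, pow_succ]
  refine mul_dvd_mul_left _
    ⟨x * (f.transvectant g).A + y * (f.transvectant g).B + z * (f.transvectant g).C, ?_⟩
  linear_combination -(f.transvectant g).A * hxyz + y * hB + z * hC

theorem IsEigen.ext_eigenCoord (hf : IsEigen f Q t) (hg : IsEigen g Q t) (hA : Q.A ≠ 0)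
    (hD : Q.disc ≠ 0) (h : eigenCoord Q t f = eigenCoord Q t g) : f = g := by
  obtain ⟨hfA, hfB, hfC⟩ := Quad.ext_iff.1 hf
  obtain ⟨hgA, hgB, hgC⟩ := Quad.ext_iff.1 hg
  simp only [BQ.contract, Quad.smul] at hfA hfB hfC hgA hgB hgC
  obtain ⟨hre, him⟩ := Zsqrtd.ext_iff.1 h
  simp only [eigenCoord] at hre him
  have ha : f.a = g.a := mul_right_cancel₀ hD (by linarith)
  rw [ha] at him hfA
  have hb : f.b = g.b := mul_right_cancel₀ hA (by linarith)
  rw [hb] at hfA hfB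
  have hc : f.c = g.c := mul_right_cancel₀ hA (by linarith)
  rw [hc] at hfB hfC
  have hd : f.d = g.d := mul_right_cancel₀ hA (by linarith)
  rw [hd] at hfC
  exact BQ.ext ha hb hc hd (mul_right_cancel₀ hA (by linarith))

end NormForm

section Automorph

variable {f : BQ ℤ} {Q : Quad ℤ} {t : ℤ}

theorem Quad.det_automorph (Q : Quad ℤ) (w : Pell.Solution₁ Q.disc) : (Q.automorph w).det = 1 := by
  have hD : Q.disc = Q.B ^ 2 - 4 * Q.A * Q.C := rfl
  simp only [Mat2.det, Quad.automorph]
  linear_combination w.prop + w.y ^ 2 * hD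

theorem Quad.subst_automorph (Q : Quad ℤ) (w : Pell.Solution₁ Q.disc) :
    Q.subst (Q.automorph w) = Q := by
  have hD : Q.disc = Q.B ^ 2 - 4 * Q.A * Q.C := rfl
  ext <;> simp only [Quad.subst, Quad.automorph]
  · linear_combination Q.A * w.prop + Q.A * w.y ^ 2 * hD
  · linear_combination Q.B * w.prop + Q.B * w.y ^ 2 * hD
  · linear_combination Q.C * w.prop + Q.C * w.y ^ 2 * hD

theorem BQ.eval_subst {R : Type*} [CommRing R] (f : BQ R) (m : Mat2 R) (x y : R) :
    (f.subst m).eval x y = f.eval (m.p * x + m.r * y) (m.q * x + m.s * y) := by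
  simp only [BQ.eval, BQ.subst]; ring

theorem BQ.eval_mul {R : Type*} [CommRing R] (f : BQ R) (z x y : R) :
    f.eval (z * x) (z * y) = z ^ 4 * f.eval x y := by
  simp only [BQ.eval]; ring

theorem BQ.map_subst {R S : Type*} [CommRing R] [CommRing S] (φ : R →+* S) (f : BQ R)
    (m : Mat2 R) : (f.subst m).map φ = (f.map φ).subst (m.map φ) := by
  ext <;> simp [BQ.map, BQ.subst, Mat2.map, map_ofNat]

/-- Evaluation at the root `(-B + √D : 2A)` of `Q` isolates one of the two conjugate
coefficients. -/
theorem IsEigen.eval_root (hf : IsEigen f Q t) :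
    (f.map (Int.castRingHom (ℤ√Q.disc))).eval ⟨-Q.B, 1⟩ ⟨2 * Q.A, 0⟩ =
      (4 * Q.disc : ℤ) * eigenCoord Q t f := by
  obtain ⟨hA, hB, hC⟩ := Quad.ext_iff.1 hf
  simp only [BQ.contract, Quad.smul] at hA hB hC
  have hD : Q.disc = Q.B ^ 2 - 4 * Q.A * Q.C := rfl
  generalize hz : eigenCoord Q t f = z
  obtain ⟨hre, him⟩ := Zsqrtd.ext_iff.1 hz
  simp only [eigenCoord] at hre him
  clear hz
  generalize Q.disc = D at *
  ext
  · refine mul_left_cancel₀ (by norm_num : (3 : ℤ) ≠ 0) ?_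
    simp only [BQ.eval, BQ.map, pow_succ, pow_zero, one_mul, Zsqrtd.re_add, Zsqrtd.re_mul,
      Zsqrtd.im_mul, eq_intCast, Zsqrtd.re_intCast, Zsqrtd.im_intCast, ← hre, ← him, hD]
    linear_combination 4 * Q.A ^ 3 * hC - 2 * Q.A ^ 2 * Q.B * hB
      + Q.A * (8 * Q.B ^ 2 - 28 * Q.A * Q.C) * hA
  · refine mul_left_cancel₀ (by norm_num : (3 : ℤ) ≠ 0) ?_
    simp only [BQ.eval, BQ.map, pow_succ, pow_zero, one_mul, Zsqrtd.im_add, Zsqrtd.re_mul,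
      Zsqrtd.im_mul, eq_intCast, Zsqrtd.re_intCast, Zsqrtd.im_intCast, ← hre, ← him, hD]
    linear_combination 4 * Q.A ^ 2 * hB - 4 * Q.A * Q.B * hA

theorem IsEigen.subst_automorph (hf : IsEigen f Q t) (w : Pell.Solution₁ Q.disc) :
    IsEigen (f.subst (Q.automorph w)) Q t := by
  have h := hf.subst_of_isUnit (m := Q.automorph w) (by simp [Q.det_automorph w])
  rwa [Q.subst_automorph w] at h

theorem IsEigen.eigenCoord_subst_automorph (hf : IsEigen f Q t) (hD : Q.disc ≠ 0)
    (w : Pell.Solution₁ Q.disc) :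
    eigenCoord Q t (f.subst (Q.automorph w)) = w ^ 4 * eigenCoord Q t f := by
  refine Zsqrtd.eq_of_smul_eq_smul_left (mul_ne_zero four_ne_zero hD) ?_
  have hdisc : Q.disc = Q.B ^ 2 - 4 * Q.A * Q.C := rfl
  have hx : ((w.x - Q.B * w.y : ℤ) : ℤ√Q.disc) * ⟨-Q.B, 1⟩ + ((-2 * Q.C * w.y : ℤ) : ℤ√Q.disc) *
      ⟨2 * Q.A, 0⟩ = w * ⟨-Q.B, 1⟩ := by
    ext <;> simp only [Zsqrtd.re_add, Zsqrtd.im_add, Zsqrtd.re_mul, Zsqrtd.im_mul,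
      Zsqrtd.re_intCast, Zsqrtd.im_intCast, Pell.Solution₁.x, Pell.Solution₁.y] <;> grind
  have hy : ((2 * Q.A * w.y : ℤ) : ℤ√Q.disc) * ⟨-Q.B, 1⟩ + ((w.x + Q.B * w.y : ℤ) : ℤ√Q.disc) *
      ⟨2 * Q.A, 0⟩ = w * ⟨2 * Q.A, 0⟩ := by
    ext <;> simp only [Zsqrtd.re_add, Zsqrtd.im_add, Zsqrtd.re_mul, Zsqrtd.im_mul,
      Zsqrtd.re_intCast, Zsqrtd.im_intCast, Pell.Solution₁.x, Pell.Solution₁.y] <;> ring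
  rw [← (hf.subst_automorph w).eval_root, BQ.map_subst, BQ.eval_subst]
  simp only [Mat2.map, Quad.automorph, eq_intCast]
  rw [hx, hy, BQ.eval_mul, hf.eval_root]
  ring

end Automorph

section Pell

variable {D : ℤ}

theorem exists_forall_eq_zpow_or_neg_zpow_of_forall_y_eq_zero
    (h : ∀ x : Pell.Solution₁ D, x.y = 0) :
    ∃ a : Pell.Solution₁ D, ∀ x : Pell.Solution₁ D, ∃ n : ℤ, x = a ^ n ∨ x = -a ^ n :=
  ⟨1, fun x ↦ ⟨0, by simpa using Pell.Solution₁.eq_one_or_neg_one_iff_y_eq_zero.2 (h x)⟩⟩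

theorem exists_forall_eq_zpow_or_neg_zpow_neg_one :
    ∃ a : Pell.Solution₁ (-1), ∀ x : Pell.Solution₁ (-1), ∃ n : ℤ, x = a ^ n ∨ x = -a ^ n := by
  refine ⟨Pell.Solution₁.mk 0 1 (by norm_num), fun x ↦ ?_⟩
  rcases x.eq_zero_of_d_neg (by norm_num) with hx | hy
  · have hy : x.y ^ 2 = 1 := by simpa [hx] using x.prop
    refine ⟨1, (sq_eq_one_iff.1 hy).imp (fun hy ↦ ?_) fun hy ↦ ?_⟩ <;>
      apply Pell.Solution₁.ext <;> simp [hx, hy]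
  · exact ⟨0, by simpa using Pell.Solution₁.eq_one_or_neg_one_iff_y_eq_zero.2 hy⟩

theorem pell_y_eq_zero_of_lt_neg_one (hD : D < -1) (x : Pell.Solution₁ D) : x.y = 0 := by
  by_contra hy
  have := x.prop
  have := sq_pos_of_ne_zero hy
  nlinarith [sq_nonneg x.x]

theorem pell_y_eq_zero_of_isSquare (hD : D ≠ 0) (hsq : IsSquare D) (x : Pell.Solution₁ D) :
    x.y = 0 := by
  obtain ⟨r, rfl⟩ := hsq
  have hmul : (x.x - r * x.y) * (x.x + r * x.y) = 1 := by linear_combination x.prop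
  have hxy : r * x.y = 0 := by linarith [Int.eq_of_mul_eq_one hmul]
  exact (mul_eq_zero.1 hxy).resolve_left (left_ne_zero_of_mul hD)

theorem exists_forall_eq_zpow_or_neg_zpow (hD : D ≠ 0) :
    ∃ a : Pell.Solution₁ D, ∀ x : Pell.Solution₁ D, ∃ n : ℤ, x = a ^ n ∨ x = -a ^ n := by
  by_cases hsq : IsSquare D
  · exact exists_forall_eq_zpow_or_neg_zpow_of_forall_y_eq_zero (pell_y_eq_zero_of_isSquare hD hsq)
  rcases lt_trichotomy D (-1) with hlt | rfl | hgt
  · exact exists_forall_eq_zpow_or_neg_zpow_of_forall_y_eq_zero (pell_y_eq_zero_of_lt_neg_one hlt)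
  · exact exists_forall_eq_zpow_or_neg_zpow_neg_one
  · obtain ⟨a, ha⟩ := Pell.IsFundamental.exists_of_not_isSquare (by lia) hsq
    exact ⟨a, ha.eq_zpow_or_neg_zpow⟩

theorem exists_finset_card_le_eight_forall_eq_mul_pow_four (hD : D ≠ 0) :
    ∃ T : Finset (Pell.Solution₁ D), T.card ≤ 8 ∧ ∀ x, ∃ y ∈ T, ∃ w, x = y * w ^ 4 := by
  classical
  obtain ⟨a, ha⟩ := exists_forall_eq_zpow_or_neg_zpow hD
  refine ⟨(Finset.Ico (0 : ℤ) 4).image (a ^ ·) ∪ (Finset.Ico (0 : ℤ) 4).image (-a ^ ·),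
    (Finset.card_union_le ..).trans
      (add_le_add Finset.card_image_le Finset.card_image_le), fun x ↦ ?_⟩
  obtain ⟨n, hn⟩ := ha x
  have hpow : a ^ n = a ^ (n % 4) * (a ^ (n / 4)) ^ 4 := by
    rw [← zpow_natCast, ← zpow_mul, ← zpow_add]
    congr 1
    lia
  have hmem : n % 4 ∈ Finset.Ico 0 4 := Finset.mem_Ico.2 ⟨by lia, by lia⟩
  rcases hn with rfl | rfl
  · exact ⟨_, Finset.mem_union_left _ (Finset.mem_image_of_mem _ hmem), _, hpow⟩
  · exact ⟨_, Finset.mem_union_right _ (Finset.mem_image_of_mem _ hmem), _, by rw [hpow, neg_mul]⟩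

theorem exists_eq_mul_of_norm_dvd_im_star_mul {α β : ℤ√D} (h : α.norm = β.norm)
    (hα : α.norm ≠ 0) (hdvd : α.norm ∣ (star α * β).im) :
    ∃ η : Pell.Solution₁ D, β = α * (η : ℤ√D) := by
  obtain ⟨v, hv⟩ := hdvd
  have hnorm : (star α * β).re ^ 2 - D * (α.norm * v) ^ 2 = α.norm ^ 2 := by
    have := Zsqrtd.norm_mul (star α) β
    rw [Zsqrtd.norm_conj, ← h, Zsqrtd.norm_def, hv] at this
    linear_combination this
  obtain ⟨u, hu⟩ : α.norm ∣ (star α * β).re :=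
    (Int.pow_dvd_pow_iff two_ne_zero).1 ⟨1 + D * v ^ 2, by linear_combination hnorm⟩
  have huv : u ^ 2 - D * v ^ 2 = 1 := by
    refine mul_left_cancel₀ (pow_ne_zero 2 hα) ?_
    rw [hu] at hnorm
    linear_combination hnorm
  refine ⟨Pell.Solution₁.mk u v huv, Zsqrtd.eq_of_smul_eq_smul_left hα ?_⟩
  have hstar : star α * β = α.norm * (⟨u, v⟩ : ℤ√D) := by
    ext <;> simp [hu, hv]
  rw [Pell.Solution₁.coe_mk, mul_left_comm, ← hstar, Zsqrtd.norm_eq_mul_conj]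
  ring

end Pell

section SlopeClass

/-- The square roots of `D` modulo `N`. -/
def sqrtMod (D : ℤ) (N : ℕ) : Finset ℤ := {κ ∈ Finset.Ico (0 : ℤ) N | (N : ℤ) ∣ κ ^ 2 - D}

/-- The elements `c (x + y√D)` with `x ≡ κ y` modulo `N`. When `κ` is a square root of `D`
modulo `N`, these are the elements of an ideal of norm `c² N`. -/
def slopeClass (D : ℤ) (c N : ℕ) (κ : ℤ) : Set (ℤ√D) :=
  {α | ∃ β : ℤ√D, α = c * β ∧ (N : ℤ) ∣ κ * β.im - β.re}

variable {D a : ℤ} {α β : ℤ√D}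

theorem dvd_im_star_mul_of_mem_slopeClass {c N : ℕ} {κ : ℤ} (hα : α ∈ slopeClass D c N κ)
    (hβ : β ∈ slopeClass D c N κ) : ((c ^ 2 * N : ℕ) : ℤ) ∣ (star α * β).im := by
  obtain ⟨α, rfl, r, hr⟩ := hα
  obtain ⟨β, rfl, s, hs⟩ := hβ
  refine ⟨s * α.im - r * β.im, ?_⟩
  simp only [star_mul', star_natCast, Zsqrtd.im_mul, Zsqrtd.re_mul, Zsqrtd.re_natCast,
    Zsqrtd.im_natCast, Zsqrtd.re_star, Zsqrtd.im_star]
  push_cast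
  linear_combination (c : ℤ) ^ 2 * (α.im * hs - β.im * hr)

theorem exists_mem_sqrtMod_mem_slopeClass_of_isCoprime_im {n : ℕ} (hn : n ≠ 0)
    (hnorm : (n : ℤ) ∣ α.norm) (him : IsCoprime α.im n) :
    ∃ κ ∈ sqrtMod D n, α ∈ slopeClass D 1 n κ := by
  obtain ⟨u, v, huv⟩ := him
  have hn' : (0 : ℤ) < n := by exact_mod_cast Nat.pos_of_ne_zero hn
  obtain ⟨k, hk⟩ : ∃ k, u * α.re = α.re * u % n + n * k :=
    ⟨α.re * u / n, by rw [mul_comm u, Int.emod_add_mul_ediv]⟩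
  set κ := α.re * u % n
  have hslope : (n : ℤ) ∣ κ * α.im - α.re :=
    ⟨-(v * α.re) - k * α.im, by linear_combination α.re * huv - α.im * hk⟩
  refine ⟨κ, Finset.mem_filter.2 ⟨Finset.mem_Ico.2 ⟨Int.emod_nonneg _ hn'.ne',
    Int.emod_lt_of_pos _ hn'⟩, ?_⟩, α, by simp, hslope⟩
  have him : IsCoprime (n : ℤ) (α.im ^ 2) := IsCoprime.pow_right ⟨v, u, by linear_combination huv⟩
  refine him.dvd_of_dvd_mul_right ?_
  have hsum := (hslope.mul_left (κ * α.im + α.re)).add hnorm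
  convert hsum using 1
  rw [Zsqrtd.norm_def]
  ring

theorem exists_mem_slopeClass {n : ℕ} (hn : n ≠ 0) (ha : IsCoprime a n)
    (hnorm : α.norm = a * n) :
    ∃ c N : ℕ, c ^ 2 * N = n ∧ ∃ κ ∈ sqrtMod D N, α ∈ slopeClass D c N κ := by
  induction n using Nat.strong_induction_on generalizing α with
  | _ n ih =>
    by_cases him : IsCoprime α.im n
    · exact ⟨1, n, by simp, exists_mem_sqrtMod_mem_slopeClass_of_isCoprime_im hn ⟨a, by
        rw [hnorm, mul_comm]⟩ him⟩
    obtain ⟨p, hp, hpim, m, rfl⟩ : ∃ p : ℕ, p.Prime ∧ ↑p ∣ α.im ∧ p ∣ n := by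
      contrapose! him
      exact isCoprime_of_forall_natPrime fun p hp hpim hpn ↦
        him p hp hpim (Int.natCast_dvd_natCast.1 hpn)
    have hp' : Prime (p : ℤ) := Nat.prime_iff_prime_int.1 hp
    push_cast at hnorm ha
    have hpre : (p : ℤ) ∣ α.re := by
      refine hp'.dvd_of_dvd_pow (n := 2) ?_
      rw [show α.re ^ 2 = p * (a * m) + α.im * (D * α.im) by
        rw [Zsqrtd.norm_def] at hnorm; linear_combination hnorm]
      exact dvd_add (dvd_mul_right ..) (hpim.mul_right _)
    obtain ⟨β, rfl⟩ : (p : ℤ√D) ∣ α := by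
      exact_mod_cast (Zsqrtd.intCast_dvd p α).2 ⟨hpre, hpim⟩
    have hnormβ : p * β.norm = a * m := by
      refine mul_left_cancel₀ hp'.ne_zero ?_
      rw [Zsqrtd.norm_mul, Zsqrtd.norm_natCast] at hnorm
      linear_combination hnorm
    obtain ⟨k, rfl⟩ : p ∣ m := Int.natCast_dvd_natCast.1 <|
      (IsCoprime.of_mul_right_left ha).symm.dvd_of_dvd_mul_left ⟨_, hnormβ.symm⟩
    push_cast at ha hnormβ
    have hk : k ≠ 0 := by rintro rfl; simp at hn
    have hklt : k < p * (p * k) := by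
      have := hp.two_le
      nlinarith [Nat.pos_of_ne_zero hk, Nat.mul_le_mul this this]
    obtain ⟨c, N, rfl, κ, hκ, γ, rfl, hγ⟩ := ih k hklt hk
      (IsCoprime.of_mul_right_right (IsCoprime.of_mul_right_right ha))
      (mul_left_cancel₀ hp'.ne_zero (by linear_combination hnormβ))
    exact ⟨p * c, N, by ring, κ, hκ, γ, by push_cast; ring, hγ⟩

end SlopeClass

section SquareRoots

theorem card_le_of_forall_dvd_sub {s : Finset ℤ} {k r : ℕ}
    (hs : s ⊆ Finset.Ico 0 (r * k : ℤ)) (h : ∀ x ∈ s, ∀ y ∈ s, (r : ℤ) ∣ x - y) :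
    s.card ≤ k := by
  have hmaps : ∀ x ∈ s, x / r ∈ Finset.Ico (0 : ℤ) k := fun x hx ↦ by
    obtain ⟨hx₀, hx₁⟩ := Finset.mem_Ico.1 (hs hx)
    exact Finset.mem_Ico.2 ⟨Int.ediv_nonneg hx₀ (by positivity),
      Int.ediv_lt_of_lt_mul (pos_of_mul_pos_left (hx₀.trans_lt hx₁) (by positivity)) (by linarith)⟩
  have hinj : Set.InjOn (fun x : ℤ ↦ x / r) s := fun x hx y hy hxy ↦ by
    have hmod : x % r = y % r := Int.emod_eq_emod_iff_emod_sub_eq_zero.2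
      (Int.emod_eq_zero_of_dvd (h x hx y hy))
    rw [← Int.mul_ediv_add_emod x r, ← Int.mul_ediv_add_emod y r, hmod]
    exact congrArg (fun q : ℤ ↦ r * q + y % r) hxy
  simpa using Finset.card_le_card_of_injOn _ hmaps hinj

/-- The sum of the `h` with `h² ∣ n`. -/
def sqDivisorSum (n : ℕ) : ℕ := ∑ h ∈ n.divisors with h ^ 2 ∣ n, h

theorem sqDivisorSum_le_of_dvd {m n : ℕ} (hn : n ≠ 0) (h : m ∣ n) :
    sqDivisorSum m ≤ sqDivisorSum n := by
  refine Finset.sum_le_sum_of_subset fun k hk ↦ ?_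
  simp only [Finset.mem_filter, Nat.mem_divisors] at hk ⊢
  exact ⟨⟨hk.1.1.trans h, hn⟩, hk.2.trans h⟩

variable {D κ κ' : ℤ} {N : ℕ}

theorem div_gcd_sub_dvd_add (hN : N ≠ 0) (h : (N : ℤ) ∣ κ ^ 2 - D) (h' : (N : ℤ) ∣ κ' ^ 2 - D) :
    ((N / (κ - κ').gcd N : ℕ) : ℤ) ∣ κ + κ' := by
  have hmul : (N : ℤ) ∣ (κ - κ').gcd N * (κ + κ') := by
    rw [Int.gcd_comm, Int.coe_gcd]
    have hsub : (N : ℤ) ∣ (κ - κ') * (κ + κ') := by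
      have := dvd_sub h h'
      rwa [show κ ^ 2 - D - (κ' ^ 2 - D) = (κ - κ') * (κ + κ') by ring] at this
    exact dvd_gcd_mul_of_dvd_mul hsub
  have hg : (κ - κ').gcd N ∣ N := by exact_mod_cast Int.gcd_dvd_right (κ - κ') N
  have hg0 : ((κ - κ').gcd N : ℤ) ≠ 0 := by exact_mod_cast ne_zero_of_dvd_ne_zero hN hg
  refine (mul_dvd_mul_iff_left hg0).1 ?_
  rwa [← Nat.cast_mul, Nat.mul_div_cancel' hg]

theorem card_sqrtMod_filter_gcd_le (hN : N ≠ 0) (hκ' : (N : ℤ) ∣ κ' ^ 2 - D) {g : ℕ}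
    (hg : g ∣ N) : {κ ∈ sqrtMod D N | (κ - κ').gcd N = g}.card ≤ g.gcd (N / g) := by
  refine card_le_of_forall_dvd_sub (r := g.lcm (N / g)) (fun κ hκ ↦ ?_)
    fun x hx y hy ↦ ?_
  · rw [← Nat.cast_mul, mul_comm, Nat.gcd_mul_lcm, Nat.mul_div_cancel' hg]
    exact (Finset.mem_filter.1 (Finset.mem_filter.1 hκ).1).1
  · simp only [sqrtMod, Finset.mem_filter] at hx hy
    obtain ⟨⟨-, hx⟩, hxg⟩ := hx
    obtain ⟨⟨-, hy⟩, rfl⟩ := hy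
    rw [Int.natCast_dvd]
    refine Nat.lcm_dvd (Int.natCast_dvd.1 ?_) (Int.natCast_dvd.1 ?_)
    · have hx : ((y - κ').gcd N : ℤ) ∣ x - κ' := hxg ▸ Int.gcd_dvd_left ..
      simpa using dvd_sub hx (Int.gcd_dvd_left (y - κ') N)
    · have hx := div_gcd_sub_dvd_add hN hx hκ'
      rw [hxg] at hx
      simpa using dvd_sub hx (div_gcd_sub_dvd_add hN hy hκ')

theorem card_sqrtMod_le (D : ℤ) (hN : N ≠ 0) :
    (sqrtMod D N).card ≤ N.divisors.card * sqDivisorSum N := by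
  obtain hempty | ⟨κ', hκ'⟩ := (sqrtMod D N).eq_empty_or_nonempty
  · simp [hempty]
  have hmaps : ∀ κ ∈ sqrtMod D N, (κ - κ').gcd N ∈ N.divisors := fun κ _ ↦
    Nat.mem_divisors.2 ⟨by exact_mod_cast Int.gcd_dvd_right (κ - κ') N, hN⟩
  rw [Finset.card_eq_sum_card_fiberwise hmaps, ← smul_eq_mul]
  refine Finset.sum_le_card_nsmul _ _ _ fun g hg ↦ ?_
  have hgN := Nat.dvd_of_mem_divisors hg
  refine (card_sqrtMod_filter_gcd_le hN (Finset.mem_filter.1 hκ').2 hgN).trans ?_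
  refine Finset.single_le_sum (f := fun h ↦ h) (fun _ _ ↦ Nat.zero_le _)
    (Finset.mem_filter.2 ⟨Nat.mem_divisors.2 ⟨(Nat.gcd_dvd_left ..).trans hgN, hN⟩, ?_⟩)
  calc g.gcd (N / g) ^ 2 = g.gcd (N / g) * g.gcd (N / g) := sq _
    _ ∣ g * (N / g) := mul_dvd_mul (Nat.gcd_dvd_left ..) (Nat.gcd_dvd_right ..)
    _ = N := Nat.mul_div_cancel' hgN

end SquareRoots

section ClassCount

variable {α ι : Type*} [Setoid α] {S : Set α}

/-- The number of equivalence classes meeting `S`. -/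
def classCount (S : Set α) : ℕ∞ := (Quotient.mk ‹Setoid α› '' S).encard

theorem classCount_le_one (h : ∀ x ∈ S, ∀ y ∈ S, x ≈ y) : classCount S ≤ 1 := by
  rw [classCount, Set.encard_le_one_iff]
  rintro _ _ ⟨x, hx, rfl⟩ ⟨y, hy, rfl⟩
  exact Quotient.sound (h x hx y hy)

theorem classCount_le_of_forall_exists_equiv {T : Set α} (h : ∀ x ∈ S, ∃ y ∈ T, x ≈ y) :
    classCount S ≤ classCount T := by
  refine Set.encard_le_encard ?_
  rintro _ ⟨x, hx, rfl⟩
  obtain ⟨y, hy, hxy⟩ := h x hx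
  exact ⟨y, hy, (Quotient.sound hxy).symm⟩

theorem classCount_le_sum (s : Finset ι) (T : ι → Set α)
    (h : ∀ x ∈ S, ∃ i ∈ s, ∃ y ∈ T i, x ≈ y) : classCount S ≤ ∑ i ∈ s, classCount (T i) := by
  refine (Set.encard_le_encard ?_).trans (s.set_encard_biUnion_le _)
  rintro _ ⟨x, hx, rfl⟩
  obtain ⟨i, hi, y, hy, hxy⟩ := h x hx
  exact Set.mem_biUnion hi ⟨y, hy, (Quotient.sound hxy).symm⟩

theorem classCount_le_card_mul (s : Finset ι) (T : ι → Set α) {k : ℕ∞}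
    (h : ∀ x ∈ S, ∃ i ∈ s, ∃ y ∈ T i, x ≈ y) (hT : ∀ i ∈ s, classCount (T i) ≤ k) :
    classCount S ≤ s.card * k := by
  rw [← nsmul_eq_mul]
  exact (classCount_le_sum s T h).trans (Finset.sum_le_card_nsmul _ _ _ hT)

end ClassCount

section EigenForms

/-- The forms with eigenform `Q`, eigenvalue `2t`, and `4 I - t² = m`; this is the value that
governs the norm of `eigenCoord`. -/
def eigenForms (Q : Quad ℤ) (t m : ℤ) : Set (BQ ℤ) :=
  {f | IsEigen f Q t ∧ 4 * f.invI - t ^ 2 = m}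

variable {f g : BQ ℤ} {Q : Quad ℤ} {t k m : ℤ}

theorem norm_eigenCoord_of_mem_eigenForms (hf : f ∈ eigenForms Q t (3 * k)) :
    (eigenCoord Q t f).norm = Q.A ^ 4 * k := by
  refine mul_left_cancel₀ (by norm_num : (3 : ℤ) ≠ 0) ?_
  rw [hf.1.norm_eigenCoord, hf.2]
  ring

theorem equiv_of_eigenCoord_eq_pow_mul (hA : Q.A ≠ 0) (hD : Q.disc ≠ 0) (hf : IsEigen f Q t)
    (hg : IsEigen g Q t) {w : Pell.Solution₁ Q.disc}
    (h : eigenCoord Q t g = w ^ 4 * eigenCoord Q t f) : f ≈ g :=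
  ⟨Q.automorph w, by simp [Q.det_automorph w], hg.ext_eigenCoord (hf.subst_automorph w) hA hD
    (h.trans (hf.eigenCoord_subst_automorph hD w).symm)⟩

theorem exists_eigenCoord_eq_mul (hQ : Q.IsPrimitive) (hA : Q.A ≠ 0) (hk : k ≠ 0)
    (hcop : IsCoprime Q.A k) (hf : f ∈ eigenForms Q t (3 * k)) (hg : g ∈ eigenForms Q t (3 * k))
    {c N : ℕ} {κ : ℤ} (hcN : c ^ 2 * N = k.natAbs)
    (hfκ : eigenCoord Q t f ∈ slopeClass Q.disc c N κ)
    (hgκ : eigenCoord Q t g ∈ slopeClass Q.disc c N κ) :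
    ∃ η : Pell.Solution₁ Q.disc, eigenCoord Q t g = eigenCoord Q t f * (η : ℤ√Q.disc) := by
  have hnormf := norm_eigenCoord_of_mem_eigenForms hf
  have hnormg := norm_eigenCoord_of_mem_eigenForms hg
  refine exists_eq_mul_of_norm_dvd_im_star_mul (hnormf.trans hnormg.symm) ?_ ?_
  · rw [hnormf]
    exact mul_ne_zero (pow_ne_zero 4 hA) hk
  · rw [hnormf]
    refine hcop.pow_left.mul_dvd (hf.1.pow_dvd_im_star_mul hg.1 hQ) (Int.natAbs_dvd.1 ?_)
    rw [← hcN]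
    exact dvd_im_star_mul_of_mem_slopeClass hfκ hgκ

theorem classCount_eigenForms_slopeClass_le (hQ : Q.IsPrimitive) (hA : Q.A ≠ 0)
    (hD : Q.disc ≠ 0) (hk : k ≠ 0) (hcop : IsCoprime Q.A k) {c N : ℕ} (κ : ℤ)
    (hcN : c ^ 2 * N = k.natAbs) :
    classCount {f ∈ eigenForms Q t (3 * k) | eigenCoord Q t f ∈ slopeClass Q.disc c N κ} ≤ 8 := by
  set S := {f ∈ eigenForms Q t (3 * k) | eigenCoord Q t f ∈ slopeClass Q.disc c N κ}
  obtain hempty | ⟨f₀, hf₀, hf₀κ⟩ := S.eq_empty_or_nonempty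
  · simp [hempty, classCount]
  obtain ⟨T, hT, hTx⟩ := exists_finset_card_le_eight_forall_eq_mul_pow_four hD
  let U (y : Pell.Solution₁ Q.disc) : Set (BQ ℤ) :=
    {f ∈ S | ∃ w : Pell.Solution₁ Q.disc, eigenCoord Q t f = eigenCoord Q t f₀ * (y * w ^ 4)}
  refine (classCount_le_card_mul T U (k := 1) (fun f hf ↦ ?_) fun y _ ↦ ?_).trans
    (by rw [mul_one]; exact_mod_cast hT)
  · obtain ⟨η, hη⟩ := exists_eigenCoord_eq_mul hQ hA hk hcop hf₀ hf.1 hcN hf₀κ hf.2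
    obtain ⟨y, hy, w, rfl⟩ := hTx η
    exact ⟨y, hy, f, ⟨hf, w, hη⟩, Setoid.refl f⟩
  · refine classCount_le_one fun f hf g hg ↦ ?_
    obtain ⟨hfS, w, hw⟩ := hf
    obtain ⟨hgS, z, hz⟩ := hg
    refine equiv_of_eigenCoord_eq_pow_mul hA hD hfS.1.1 hgS.1.1 (w := z * w⁻¹) ?_
    have hpow : (z * w⁻¹) ^ 4 * w ^ 4 = z ^ 4 := by rw [mul_pow, inv_pow, inv_mul_cancel_right]
    have hpow : ((z * w⁻¹ : Pell.Solution₁ Q.disc) : ℤ√Q.disc) ^ 4 * (w : ℤ√Q.disc) ^ 4 =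
      (z : ℤ√Q.disc) ^ 4 := congrArg Subtype.val hpow
    rw [hw, hz, ← hpow]
    ring

theorem classCount_eigenForms_three_mul_le (hQ : Q.IsPrimitive) (hA : Q.A ≠ 0)
    (hD : Q.disc ≠ 0) (hk : k ≠ 0) (hcop : IsCoprime Q.A k) :
    classCount (eigenForms Q t (3 * k)) ≤
      (8 * k.natAbs.divisors.card ^ 2 * sqDivisorSum k.natAbs : ℕ) := by
  set n := k.natAbs
  have hn₀ : n ≠ 0 := Int.natAbs_ne_zero.2 hk
  let T (c : ℕ) : Set (BQ ℤ) := {f ∈ eigenForms Q t (3 * k) |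
    ∃ κ ∈ sqrtMod Q.disc (n / c ^ 2), eigenCoord Q t f ∈ slopeClass Q.disc c (n / c ^ 2) κ}
  have hT : ∀ c ∈ {c ∈ n.divisors | c ^ 2 ∣ n},
      classCount (T c) ≤ (n.divisors.card * sqDivisorSum n * 8 : ℕ) := fun c hc ↦ by
    have hmul := Nat.mul_div_cancel' (Finset.mem_filter.1 hc).2
    have hN : n / c ^ 2 ∣ n := ⟨c ^ 2, by rw [mul_comm, hmul]⟩
    refine (classCount_le_card_mul (sqrtMod Q.disc (n / c ^ 2))
      (fun κ ↦ {f ∈ eigenForms Q t (3 * k) |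
        eigenCoord Q t f ∈ slopeClass Q.disc c (n / c ^ 2) κ})
      (fun f hf ↦ hf.2.imp fun κ hκ ↦ ⟨hκ.1, f, ⟨hf.1, hκ.2⟩, Setoid.refl f⟩) fun κ _ ↦
      classCount_eigenForms_slopeClass_le hQ hA hD hk hcop κ hmul).trans ?_
    norm_cast
    gcongr
    exact (card_sqrtMod_le _ (ne_zero_of_dvd_ne_zero hn₀ hN)).trans <| by
      gcongr
      exact sqDivisorSum_le_of_dvd hn₀ hN
  refine (classCount_le_card_mul _ T (fun f hf ↦ ?_) hT).trans ?_
  · obtain ⟨c, N, hcN, κ, hκ, hfκ⟩ := exists_mem_slopeClass (a := Q.A ^ 4 * k.sign) hn₀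
      ((isCoprime_mul_unit_right_left (Int.isUnit_iff_natAbs_eq.2 (Int.natAbs_sign_of_ne_zero hk))
        _ _).2 (Int.natCast_natAbs k ▸ hcop.abs_right.pow_left))
      (by rw [norm_eigenCoord_of_mem_eigenForms hf, mul_assoc, Int.sign_mul_natAbs])
    have hc : c ∈ {c ∈ n.divisors | c ^ 2 ∣ n} := Finset.mem_filter.2 ⟨Nat.mem_divisors.2
      ⟨(dvd_pow_self c two_ne_zero).trans ⟨N, hcN.symm⟩, hn₀⟩, N, hcN.symm⟩
    have hc₀ : c ^ 2 ≠ 0 := left_ne_zero_of_mul (hcN ▸ hn₀)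
    obtain rfl : N = n / c ^ 2 := by rw [← hcN, Nat.mul_div_cancel_left _ hc₀.bot_lt]
    exact ⟨c, hc, f, ⟨hf, κ, hκ, hfκ⟩, Setoid.refl f⟩
  · norm_cast
    calc _ ≤ n.divisors.card * (n.divisors.card * sqDivisorSum n * 8) := by
          gcongr
          exact Finset.filter_subset ..
      _ = _ := by ring

theorem classCount_eigenForms_le_of_isCoprime (hQ : Q.IsPrimitive) (hD : Q.disc ≠ 0) (hm : m ≠ 0)
    (hcop : IsCoprime Q.A (3 * m)) : classCount (eigenForms Q t m) ≤
      (8 * m.natAbs.divisors.card ^ 2 * sqDivisorSum m.natAbs : ℕ) := by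
  obtain hempty | ⟨f₀, hf₀⟩ := (eigenForms Q t m).eq_empty_or_nonempty
  · simp [hempty, classCount]
  have hA : Q.A ≠ 0 := by
    intro hA
    rw [hA, isCoprime_zero_left, Int.isUnit_iff] at hcop
    lia
  obtain ⟨k, rfl⟩ : 3 ∣ m := hcop.of_mul_right_left.symm.pow_right.dvd_of_dvd_mul_left
    ⟨_, by rw [← hf₀.2, ← hf₀.1.norm_eigenCoord]⟩
  have hkm : k.natAbs ∣ (3 * k).natAbs := Int.natAbs_dvd_natAbs.2 (dvd_mul_left k 3)
  have hm' : (3 * k).natAbs ≠ 0 := Int.natAbs_ne_zero.2 hm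
  refine (classCount_eigenForms_three_mul_le hQ hA hD (right_ne_zero_of_mul hm)
    hcop.of_mul_right_right.of_mul_right_right).trans (Nat.cast_le.2 ?_)
  gcongr
  exact sqDivisorSum_le_of_dvd hm' hkm

theorem classCount_eigenForms_le (hQ : Q.IsPrimitive) (hD : Q.disc ≠ 0) (hm : m ≠ 0) :
    classCount (eigenForms Q t m) ≤
      (8 * m.natAbs.divisors.card ^ 2 * sqDivisorSum m.natAbs : ℕ) := by
  obtain ⟨γ, hγ, hcop⟩ := hQ.exists_subst_isCoprime (mul_ne_zero three_ne_zero hm)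
  have hD' : (Q.subst γ).disc ≠ 0 := by rwa [Quad.disc_subst_of_isUnit Q hγ]
  refine le_trans ?_ (classCount_eigenForms_le_of_isCoprime (t := t) (hQ.subst hγ) hD' hm hcop)
  exact classCount_le_of_forall_exists_equiv fun f hf ↦ ⟨f.subst γ,
    ⟨hf.1.subst_of_isUnit hγ, by rw [BQ.invI_subst_of_isUnit f hγ, hf.2]⟩, γ, hγ, rfl⟩

end EigenForms

section ReducedQuads

theorem card_intDivisors (n : ℤ) : n.divisors.card = 2 * n.natAbs.divisors.card := by
  rw [Int.divisors, Finset.card_disjUnion, Finset.card_map, Finset.card_map, two_mul]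

open Classical in
/-- A finite set of quadratic forms with middle coefficient in `[-L, L]`; it contains all reduced
forms whose discriminant divides `R`, once `0 < |R| ≤ L²`. -/
def reducedQuads (R : ℤ) (L : ℕ) : Finset (Quad ℤ) :=
  (R.divisors ×ˢ Finset.Icc (-L : ℤ) L).image (fun p ↦ ⟨0, p.1, p.2⟩) ∪
    (R.divisors ×ˢ Finset.Icc (-L : ℤ) L).biUnion fun p ↦
      ((p.2 ^ 2 - p.1) / 4).divisors.image fun A ↦ ⟨A, p.2, (p.2 ^ 2 - p.1) / 4 / A⟩

variable {R : ℤ} {L : ℕ}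

theorem Quad.IsReduced.mem_reducedQuads {Q : Quad ℤ} (hQ : Q.IsReduced) (hR : R ≠ 0)
    (hRL : |R| ≤ L ^ 2) (hQR : Q.disc ∣ R) : Q ∈ reducedQuads R L := by
  classical
  obtain ⟨A, B, C⟩ := Q
  have hdisc : |Quad.disc ⟨A, B, C⟩| ≤ |R| :=
    Int.le_of_dvd (abs_pos.2 hR) ((abs_dvd_abs _ _).2 hQR)
  have hB : |B| ≤ L := abs_le_of_sq_le_sq (hQ.sq_B_le.trans (hdisc.trans hRL)) (by positivity)
  have hB' : B ∈ Finset.Icc (-L : ℤ) L := Finset.mem_Icc.2 (abs_le.1 hB)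
  rw [reducedQuads, Finset.mem_union, Finset.mem_image, Finset.mem_biUnion]
  obtain rfl | hA := eq_or_ne A 0
  · have hBR : B ∣ R := (dvd_pow_self B two_ne_zero).trans (by simpa [Quad.disc] using hQR)
    exact .inl ⟨(B, C), Finset.mk_mem_product (Int.mem_divisors.2 ⟨hBR, hR⟩)
      (Finset.mem_Icc.2 (abs_le.1 ((hQ.abs_C_le rfl).trans hB))), rfl⟩
  · have hC : C ≠ 0 := hQ.C_ne_zero hA
    have hAC : (B ^ 2 - Quad.disc ⟨A, B, C⟩) / 4 = A * C := by
      rw [show B ^ 2 - Quad.disc ⟨A, B, C⟩ = 4 * (A * C) by simp only [Quad.disc]; ring,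
        Int.mul_ediv_cancel_left _ four_ne_zero]
    refine .inr ⟨(Quad.disc ⟨A, B, C⟩, B), Finset.mk_mem_product (Int.mem_divisors.2 ⟨hQR, hR⟩) hB',
      Finset.mem_image.2 ⟨A, ?_, ?_⟩⟩
    · exact Int.mem_divisors.2 ⟨hAC ▸ dvd_mul_right A C, hAC ▸ mul_ne_zero hA hC⟩
    · rw [hAC, Int.mul_ediv_cancel_left _ hA]

theorem card_reducedQuads_le (hR : R ≠ 0) (hRL : |R| ≤ L ^ 2) {E : ℕ}
    (hE : ∀ n ≤ L ^ 2, n.divisors.card ≤ E) :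
    (reducedQuads R L).card ≤ 6 * E ^ 2 * (2 * L + 1) := by
  classical
  have hdiv (n : ℤ) (hn : |n| ≤ L ^ 2) : n.divisors.card ≤ 2 * E := by
    rw [card_intDivisors]
    gcongr
    exact hE _ (by zify; exact hn)
  have hE₀ : 1 ≤ E := (Finset.card_pos.2 (Nat.nonempty_divisors.2
    (Int.natAbs_ne_zero.2 hR))).trans_le (hE R.natAbs (by zify; exact hRL))
  have hprod : (R.divisors ×ˢ Finset.Icc (-L : ℤ) L).card ≤ 2 * E * (2 * L + 1) := by
    rw [Finset.card_product]
    gcongr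
    · exact hdiv R hRL
    · rw [Int.card_Icc]
      lia
  have hfib : ∀ p ∈ R.divisors ×ˢ Finset.Icc (-L : ℤ) L, (((p.2 ^ 2 - p.1) / 4).divisors.image
      fun A ↦ (⟨A, p.2, (p.2 ^ 2 - p.1) / 4 / A⟩ : Quad ℤ)).card ≤ 2 * E := fun ⟨D, B⟩ hp ↦ by
    obtain ⟨hD, hB⟩ := Finset.mem_product.1 hp
    have hD := (Int.le_of_dvd (abs_pos.2 hR)
      ((abs_dvd_abs _ _).2 (Int.dvd_of_mem_divisors hD))).trans hRL
    have hB := sq_le_sq' (Finset.mem_Icc.1 hB).1 (Finset.mem_Icc.1 hB).2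
    refine Finset.card_image_le.trans (hdiv _ ?_)
    have hB₀ := sq_nonneg B
    rw [abs_le] at hD ⊢
    constructor <;> dsimp only at hB ⊢ <;> lia
  calc (reducedQuads R L).card
      ≤ 2 * E * (2 * L + 1) + 2 * E * (2 * L + 1) * (2 * E) :=
        (Finset.card_union_le _ _).trans <| add_le_add (Finset.card_image_le.trans hprod) <|
          (Finset.card_biUnion_le_card_mul _ _ _ hfib).trans (by gcongr)
    _ = (2 * E * 1 + 4 * E * E) * (2 * L + 1) := by ring
    _ ≤ (2 * E * E + 4 * E * E) * (2 * L + 1) := by gcongr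
    _ = 6 * E ^ 2 * (2 * L + 1) := by ring

end ReducedQuads

section Counting

/-- The forms with `4 I - t² = m` that have some nondegenerate primitive eigenform with
eigenvalue `2t`. -/
def eigenvalueForms (t m : ℤ) : Set (BQ ℤ) :=
  {f | ∃ Q : Quad ℤ, Q.IsPrimitive ∧ Q.disc ≠ 0 ∧ f ∈ eigenForms Q t m}

theorem classCount_eigenvalueForms_le {t m : ℤ} {L E : ℕ} (hm : m ≠ 0) (hmL : |m| ≤ (L : ℤ) ^ 2)
    (hR : m - 3 * t ^ 2 ≠ 0) (hRL : |m - 3 * t ^ 2| ≤ (L : ℤ) ^ 2)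
    (hE : ∀ n ≤ L ^ 2, n.divisors.card ≤ E) :
    classCount (eigenvalueForms t m) ≤
      (48 * E ^ 4 * (2 * L + 1) * sqDivisorSum m.natAbs : ℕ) := by
  classical
  have hclass : ∀ Q ∈ {Q ∈ reducedQuads (m - 3 * t ^ 2) L | Q.IsPrimitive ∧ Q.disc ≠ 0},
      classCount (eigenForms Q t m) ≤ (8 * E ^ 2 * sqDivisorSum m.natAbs : ℕ) := fun Q hQ ↦ by
    obtain ⟨-, hQ, hD⟩ := Finset.mem_filter.1 hQ
    refine (classCount_eigenForms_le hQ hD hm).trans (Nat.cast_le.2 ?_)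
    gcongr
    exact hE _ (by zify; exact hmL)
  refine (classCount_le_card_mul _ _ (fun f hf ↦ ?_) hclass).trans ?_
  · obtain ⟨Q, hQ, hD, hf⟩ := hf
    obtain ⟨γ, hγ, hred⟩ := Q.exists_subst_isReduced hD
    have hD' : (Q.subst γ).disc ≠ 0 := by rwa [Quad.disc_subst_of_isUnit Q hγ]
    have hg : f.subst γ ∈ eigenForms (Q.subst γ) t m :=
      ⟨hf.1.subst_of_isUnit hγ, by rw [BQ.invI_subst_of_isUnit f hγ, hf.2]⟩
    have hdvd : (Q.subst γ).disc ∣ m - 3 * t ^ 2 := by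
      convert hg.1.disc_dvd (hQ.subst hγ) hD' using 1
      rw [← hg.2]
      ring
    exact ⟨Q.subst γ, Finset.mem_filter.2 ⟨hred.mem_reducedQuads hR hRL hdvd, hQ.subst hγ, hD'⟩,
      f.subst γ, hg, γ, hγ, rfl⟩
  · norm_cast
    calc _ ≤ 6 * E ^ 2 * (2 * L + 1) * (8 * E ^ 2 * sqDivisorSum m.natAbs) := by
          gcongr
          exact (Finset.card_filter_le _ _).trans (card_reducedQuads_le hR hRL hE)
      _ = _ := by ring

theorem IsEigen.mul_sq_eq_disc {f : BQ ℤ} {Q : Quad ℤ} {t : ℤ} (h : IsEigen f Q t)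
    (hQ : Q ≠ ⟨0, 0, 0⟩) : (4 * f.invI - t ^ 2) * (f.invI - t ^ 2) ^ 2 = 27 * f.disc := by
  rw [f.disc_eq, ← sub_eq_of_eq_add' (h.cubic hQ)]
  ring

theorem abs_le_two_mul_of_cube_eq {t I J K : ℤ} (hK : 0 ≤ K) (h : t ^ 3 = 3 * I * t + J)
    (hI : |I| ≤ K ^ 2) (hJ : |J| ≤ 2 * K ^ 3) : |t| ≤ 2 * K := by
  by_contra! hlt
  have hcube : |t| ^ 3 ≤ 3 * (K ^ 2 * |t|) + 2 * K ^ 3 := by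
    rw [← abs_pow, h]
    calc |3 * I * t + J| ≤ |3 * I * t| + |J| := abs_add_le _ _
      _ = 3 * (|I| * |t|) + |J| := by rw [abs_mul, abs_mul, abs_of_pos (three_pos : (0 : ℤ) < 3),
            mul_assoc]
      _ ≤ 3 * (K ^ 2 * |t|) + 2 * K ^ 3 := by gcongr
  have hpos : 0 < (|t| - 2 * K) * (|t| + K) ^ 2 := by
    have : 0 < |t| + K := by linarith
    have : 0 < |t| - 2 * K := by linarith
    positivity
  linarith

/-- The forms to be counted, with height bounded by `K⁶`. -/
def boundedStabForms (K : ℕ) : Set (BQ ℤ) :=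
  {f | f.disc ≠ 0 ∧ NontrivialStab f ∧ |f.invI| ≤ K ^ 2 ∧ |f.invJ| ≤ 2 * K ^ 3}

theorem exists_mem_eigenvalueForms {K : ℕ} {f : BQ ℤ} (hf : f ∈ boundedStabForms K) :
    ∃ t m : ℤ, |t| ≤ 2 * K ∧ |m| ≤ 8 * K ^ 2 ∧ m ≠ 0 ∧ m - 3 * t ^ 2 ≠ 0 ∧
      |m - 3 * t ^ 2| ≤ (5 * K : ℤ) ^ 2 ∧ f ∈ eigenvalueForms t m := by
  obtain ⟨hdisc, hstab, hI, hJ⟩ := hf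
  obtain ⟨Q, t, hQ, hD, hft⟩ := hstab.exists_isEigen hdisc
  have hQ₀ := Quad.ne_zero_of_disc_ne_zero hD
  have ht := abs_le_two_mul_of_cube_eq (Nat.cast_nonneg K) (hft.cubic hQ₀) hI hJ
  have hprod : (4 * f.invI - t ^ 2) * (f.invI - t ^ 2) ^ 2 ≠ 0 := by
    rw [hft.mul_sq_eq_disc hQ₀]
    exact mul_ne_zero (by norm_num) hdisc
  have ht₀ := sq_nonneg t
  have ht₂ := sq_le_sq' (abs_le.1 ht).1 (abs_le.1 ht).2
  obtain ⟨hI₁, hI₂⟩ := abs_le.1 hI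
  refine ⟨t, 4 * f.invI - t ^ 2, ht, abs_le.2 ⟨by linarith, by linarith⟩,
    left_ne_zero_of_mul hprod, ?_, abs_le.2 ⟨by linarith, by linarith⟩, Q, hQ, hD, hft, rfl⟩
  have hne : f.invI - t ^ 2 ≠ 0 := (pow_ne_zero_iff two_ne_zero).1 (right_ne_zero_of_mul hprod)
  rw [show 4 * f.invI - t ^ 2 - 3 * t ^ 2 = 4 * (f.invI - t ^ 2) by ring]
  exact mul_ne_zero four_ne_zero hne

theorem classCount_boundedStabForms_le {K E : ℕ}
    (hE : ∀ n ≤ (5 * K) ^ 2, n.divisors.card ≤ E) :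
    classCount (boundedStabForms K) ≤ ((4 * K + 1) * (48 * E ^ 4 * (10 * K + 1)) *
      ∑ m ∈ Finset.Icc (-(8 * K ^ 2 : ℕ) : ℤ) (8 * K ^ 2 : ℕ), sqDivisorSum m.natAbs : ℕ) := by
  set M : ℕ := 8 * K ^ 2 with hM
  let s : Finset (ℤ × ℤ) := {p ∈ Finset.Icc (-(2 * K) : ℤ) (2 * K) ×ˢ Finset.Icc (-M : ℤ) M |
    p.2 ≠ 0 ∧ p.2 - 3 * p.1 ^ 2 ≠ 0 ∧ |p.2 - 3 * p.1 ^ 2| ≤ (5 * K : ℤ) ^ 2}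
  have hcover : ∀ f ∈ boundedStabForms K, ∃ p ∈ s, ∃ g ∈ eigenvalueForms p.1 p.2, f ≈ g :=
    fun f hf ↦ by
      obtain ⟨t, m, ht, hmM, hm, hR, hRL, hmem⟩ := exists_mem_eigenvalueForms hf
      exact ⟨(t, m), Finset.mem_filter.2 ⟨Finset.mk_mem_product (Finset.mem_Icc.2 (abs_le.1 ht))
        (Finset.mem_Icc.2 (abs_le.1 (by exact_mod_cast hmM))), hm, hR, hRL⟩, f, hmem, Setoid.refl f⟩
  have hclass : ∀ p ∈ s, classCount (eigenvalueForms p.1 p.2) ≤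
      (48 * E ^ 4 * (10 * K + 1) * sqDivisorSum p.2.natAbs : ℕ) := fun p hp ↦ by
    obtain ⟨hp, hm, hR, hRL⟩ := Finset.mem_filter.1 hp
    have hmM := abs_le.2 (Finset.mem_Icc.1 (Finset.mem_product.1 hp).2)
    convert classCount_eigenvalueForms_le hm (L := 5 * K) ?_ hR (by exact_mod_cast hRL) hE using 4
    · ring
    · push_cast [hM] at hmM ⊢
      nlinarith
  refine (classCount_le_sum s _ hcover).trans ((Finset.sum_le_sum hclass).trans ?_)
  norm_cast
  calc ∑ p ∈ s, 48 * E ^ 4 * (10 * K + 1) * sqDivisorSum p.2.natAbs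
      ≤ ∑ p ∈ Finset.Icc (-(2 * K) : ℤ) (2 * K) ×ˢ Finset.Icc (-M : ℤ) M,
          48 * E ^ 4 * (10 * K + 1) * sqDivisorSum p.2.natAbs :=
        Finset.sum_le_sum_of_subset (Finset.filter_subset _ _)
    _ = _ := by
        have hcard : (Finset.Icc (-(2 * K) : ℤ) (2 * K)).card = 4 * K + 1 := by
          rw [Int.card_Icc]
          lia
        simp only [Finset.sum_product, Finset.sum_const, ← Finset.mul_sum, hcard, smul_eq_mul]
        ring

end Counting

section DivisorBounds

theorem sum_sqDivisorSum_le (M : ℕ) :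
    (∑ n ∈ Finset.Icc 1 M, sqDivisorSum n : ℝ) ≤ M * (1 + Real.log M) := by
  have hswap : ∑ n ∈ Finset.Icc 1 M, sqDivisorSum n =
      ∑ h ∈ Finset.Icc 1 M, ∑ n ∈ Finset.Ioc 0 M with h ^ 2 ∣ n, h :=
    Finset.sum_comm' fun n h ↦ by
      simp only [Finset.mem_filter, Finset.mem_Icc, Finset.mem_Ioc, Nat.mem_divisors]
      constructor
      · rintro ⟨⟨hn, hnM⟩, ⟨hh, -⟩, hsq⟩
        exact ⟨⟨⟨hn, hnM⟩, hsq⟩, Nat.pos_of_dvd_of_pos hh hn, (Nat.le_of_dvd hn hh).trans hnM⟩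
      · rintro ⟨⟨⟨hn, hnM⟩, hsq⟩, -⟩
        exact ⟨⟨hn, hnM⟩, ⟨(dvd_pow_self h two_ne_zero).trans hsq, hn.ne'⟩, hsq⟩
  calc (∑ n ∈ Finset.Icc 1 M, sqDivisorSum n : ℝ)
      = ∑ h ∈ Finset.Icc 1 M, ((M / h ^ 2 : ℕ) : ℝ) * h := by
        rw [← Nat.cast_sum, hswap]
        simp [Nat.Ioc_filter_dvd_card_eq_div]
    _ ≤ ∑ h ∈ Finset.Icc 1 M, (M : ℝ) * (h : ℝ)⁻¹ := Finset.sum_le_sum fun h hh ↦ by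
        have hh : (h : ℝ) ≠ 0 :=
          Nat.cast_ne_zero.2 (Nat.one_le_iff_ne_zero.1 (Finset.mem_Icc.1 hh).1)
        calc ((M / h ^ 2 : ℕ) : ℝ) * h ≤ (M / (h ^ 2 : ℕ)) * h := by gcongr; exact Nat.cast_div_le
          _ = M * (h : ℝ)⁻¹ := by
            push_cast
            field_simp
    _ = M * (harmonic M : ℝ) := by rw [← Finset.mul_sum, harmonic_eq_sum_Icc]; push_cast; rfl
    _ ≤ M * (1 + Real.log M) := by gcongr; exact harmonic_le_one_add_log M

theorem sum_sqDivisorSum_natAbs_le (M : ℕ) :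
    (∑ m ∈ Finset.Icc (-M : ℤ) M, sqDivisorSum m.natAbs : ℝ) ≤ 2 * (M * (1 + Real.log M)) := by
  have heven : Function.Even fun m : ℤ ↦ (sqDivisorSum m.natAbs : ℝ) := fun m ↦ by
    simp only [Int.natAbs_neg]
  rw [Finset.sum_Icc_of_even_eq_range heven, Finset.range_eq_Ico,
    Finset.sum_eq_sum_Ico_succ_bot M.succ_pos]
  simpa [sqDivisorSum, Finset.Ico_add_one_right_eq_Icc] using sum_sqDivisorSum_le M

theorem natCast_add_one_le_mul_pow {x : ℝ} (hx : 1 < x) (k : ℕ) :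
    (k + 1 : ℝ) ≤ (1 + 1 / (x - 1)) * x ^ k := by
  have hx₀ : 0 < x - 1 := sub_pos.2 hx
  calc (k + 1 : ℝ) ≤ k + 1 + (k * (x - 1) + 1 / (x - 1)) := le_add_of_nonneg_right (by positivity)
    _ = (1 + 1 / (x - 1)) * (1 + k * (x - 1)) := by
        field_simp
        ring
    _ ≤ (1 + 1 / (x - 1)) * x ^ k := by
        gcongr
        exact one_add_mul_sub_le_pow (by linarith) k

theorem natCast_add_one_le_pow {x : ℝ} (hx : 2 ≤ x) (k : ℕ) : (k + 1 : ℝ) ≤ x ^ k :=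
  calc (k + 1 : ℝ) ≤ 2 ^ k := by exact_mod_cast Nat.succ_le_of_lt Nat.lt_two_pow_self
    _ ≤ x ^ k := by gcongr

theorem natCast_rpow_eq_prod_primeFactors {n : ℕ} (hn : n ≠ 0) (δ : ℝ) :
    (n : ℝ) ^ δ = ∏ p ∈ n.primeFactors, ((p : ℝ) ^ δ) ^ n.factorization p := by
  conv_lhs => rw [← Nat.prod_factorization_pow_eq_self hn, Finsupp.prod, Nat.cast_prod]
  rw [← Real.finsetProd_rpow _ _ fun _ _ ↦ by positivity]
  refine Finset.prod_congr rfl fun p _ ↦ ?_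
  rw [Nat.cast_pow, Real.rpow_pow_comm p.cast_nonneg]

theorem exists_card_divisors_le_mul_rpow {δ : ℝ} (hδ : 0 < δ) :
    ∃ C : ℝ, 0 < C ∧ ∀ n : ℕ, (n.divisors.card : ℝ) ≤ C * (n : ℝ) ^ δ := by
  set P : ℕ := ⌈(2 : ℝ) ^ (1 / δ)⌉₊
  set c : ℝ := 1 + 1 / (2 ^ δ - 1)
  have htwo : (1 : ℝ) < 2 ^ δ := Real.one_lt_rpow one_lt_two hδ
  have hc : 1 ≤ c := le_add_of_nonneg_right (one_div_nonneg.2 (sub_nonneg.2 htwo.le))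
  -- Only the primes below `2 ^ (1 / δ)` contribute a factor other than `1` to the constant.
  refine ⟨c ^ P, by positivity, fun n ↦ ?_⟩
  obtain rfl | hn := eq_or_ne n 0
  · simp [Real.zero_rpow hδ.ne']
  have hlocal : ∀ p ∈ n.primeFactors, (n.factorization p + 1 : ℝ) ≤
      (if p < P then c else 1) * ((p : ℝ) ^ δ) ^ n.factorization p := fun p hp ↦ by
    have hp : (2 : ℝ) ≤ p := by exact_mod_cast (Nat.prime_of_mem_primeFactors hp).two_le
    split_ifs with hpP
    · refine (natCast_add_one_le_mul_pow htwo _).trans ?_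
      gcongr
    · rw [one_mul]
      refine natCast_add_one_le_pow ?_ _
      rw [← Real.rpow_inv_le_iff_of_pos two_pos.le p.cast_nonneg hδ, ← one_div]
      exact (Nat.le_ceil _).trans (Nat.cast_le.2 (not_lt.1 hpP))
  have hsmall : {p ∈ n.primeFactors | p < P}.card ≤ P := by
    simpa using Finset.card_le_card (t := Finset.range P) fun p ↦ by simp
  rw [Nat.card_divisors hn]
  push_cast
  calc ∏ p ∈ n.primeFactors, (n.factorization p + 1 : ℝ)
      ≤ ∏ p ∈ n.primeFactors, (if p < P then c else 1) * ((p : ℝ) ^ δ) ^ n.factorization p :=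
        Finset.prod_le_prod (fun _ _ ↦ by positivity) hlocal
    _ = c ^ {p ∈ n.primeFactors | p < P}.card * (n : ℝ) ^ δ := by
        rw [Finset.prod_mul_distrib, natCast_rpow_eq_prod_primeFactors hn, ← Finset.prod_filter,
          Finset.prod_const]
    _ ≤ c ^ P * (n : ℝ) ^ δ := by gcongr

end DivisorBounds

section Asymptotics

theorem exists_forall_card_divisors_le {δ : ℝ} (hδ : 0 < δ) : ∃ C : ℝ, 0 < C ∧
    ∀ K n : ℕ, n ≤ (5 * K) ^ 2 → (n.divisors.card : ℝ) ≤ C * (K : ℝ) ^ δ := by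
  obtain ⟨C, hC, hdiv⟩ := exists_card_divisors_le_mul_rpow (half_pos hδ)
  refine ⟨C * 5 ^ δ, by positivity, fun K n hn ↦ (hdiv n).trans ?_⟩
  have hn : (n : ℝ) ≤ (5 * K) ^ 2 := by exact_mod_cast hn
  calc C * (n : ℝ) ^ (δ / 2) ≤ C * ((5 * K : ℝ) ^ 2) ^ (δ / 2) := by gcongr
    _ = C * 5 ^ δ * (K : ℝ) ^ δ := by
      rw [← Real.rpow_natCast_mul (by positivity), Nat.cast_two, mul_div_cancel₀ δ two_ne_zero,
        Real.mul_rpow (by norm_num) K.cast_nonneg, mul_assoc]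

theorem exists_forall_one_add_log_le {δ : ℝ} (hδ : 0 < δ) : ∃ C : ℝ, 0 < C ∧
    ∀ K : ℕ, 1 ≤ K → 1 + Real.log (8 * K ^ 2 : ℕ) ≤ C * (K : ℝ) ^ δ := by
  refine ⟨1 + 8 ^ (δ / 2) / (δ / 2), by positivity, fun K hK ↦ ?_⟩
  calc 1 + Real.log (8 * K ^ 2 : ℕ)
      ≤ (K : ℝ) ^ δ + ((8 * K ^ 2 : ℕ) : ℝ) ^ (δ / 2) / (δ / 2) := by
        gcongr
        · exact Real.one_le_rpow (by exact_mod_cast hK) hδ.le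
        · exact Real.log_le_rpow_div (Nat.cast_nonneg _) (half_pos hδ)
    _ = (1 + 8 ^ (δ / 2) / (δ / 2)) * (K : ℝ) ^ δ := by
        push_cast
        rw [Real.mul_rpow (by norm_num) (by positivity), ← Real.rpow_natCast_mul K.cast_nonneg,
          Nat.cast_two, mul_div_cancel₀ δ two_ne_zero]
        ring

theorem exists_classCount_boundedStabForms_le {ε : ℝ} (hε : 0 < ε) : ∃ C : ℝ, 0 < C ∧
    ∀ K : ℕ, 1 ≤ K → ∃ N : ℕ, classCount (boundedStabForms K) ≤ N ∧
      (N : ℝ) ≤ C * (K : ℝ) ^ (4 + ε) := by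
  obtain ⟨c, hc, hdiv⟩ := exists_forall_card_divisors_le (δ := ε / 5) (by positivity)
  obtain ⟨c', hc', hlog⟩ := exists_forall_one_add_log_le (δ := ε / 5) (by positivity)
  refine ⟨5 * (48 * c ^ 4 * 11) * (16 * c'), by positivity, fun K hK ↦ ?_⟩
  set E : ℕ := ⌊c * (K : ℝ) ^ (ε / 5)⌋₊
  refine ⟨_, classCount_boundedStabForms_le (E := E) fun n hn ↦ Nat.le_floor (hdiv K n hn), ?_⟩
  have hK' : (1 : ℝ) ≤ K := by exact_mod_cast hK
  have hE : (E : ℝ) ≤ c * (K : ℝ) ^ (ε / 5) := Nat.floor_le (by positivity)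
  have hsum : (∑ m ∈ Finset.Icc (-(8 * K ^ 2 : ℕ) : ℤ) (8 * K ^ 2 : ℕ), sqDivisorSum m.natAbs : ℝ) ≤
      16 * c' * (K ^ 2 * (K : ℝ) ^ (ε / 5)) := by
    calc _ ≤ 2 * ((8 * K ^ 2 : ℕ) * (1 + Real.log (8 * K ^ 2 : ℕ))) := sum_sqDivisorSum_natAbs_le _
      _ ≤ 2 * ((8 * K ^ 2 : ℕ) * (c' * (K : ℝ) ^ (ε / 5))) := by
        gcongr
        exact hlog K hK
      _ = _ := by
        push_cast
        ring
  calc (((4 * K + 1) * (48 * E ^ 4 * (10 * K + 1)) *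
        ∑ m ∈ Finset.Icc (-(8 * K ^ 2 : ℕ) : ℤ) (8 * K ^ 2 : ℕ), sqDivisorSum m.natAbs : ℕ) : ℝ)
      = (4 * K + 1) * (48 * (E : ℝ) ^ 4 * (10 * K + 1)) *
        ∑ m ∈ Finset.Icc (-(8 * K ^ 2 : ℕ) : ℤ) (8 * K ^ 2 : ℕ), (sqDivisorSum m.natAbs : ℝ) := by
        norm_cast
    _ ≤ (5 * K) * (48 * (c * (K : ℝ) ^ (ε / 5)) ^ 4 * (11 * K)) *
        (16 * c' * (K ^ 2 * (K : ℝ) ^ (ε / 5))) := by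
        gcongr <;> linarith
    _ = 5 * (48 * c ^ 4 * 11) * (16 * c') * ((K : ℝ) ^ 4 * ((K : ℝ) ^ (ε / 5)) ^ 5) := by ring
    _ = 5 * (48 * c ^ 4 * 11) * (16 * c') * (K : ℝ) ^ (4 + ε) := by
        rw [← Real.rpow_mul_natCast K.cast_nonneg, Nat.cast_ofNat, div_mul_cancel₀ ε (by norm_num),
          Real.rpow_add (by positivity), Real.rpow_ofNat]

theorem finite_and_card_quot_le_of_classCount_le {α : Type*} [Setoid α] {p : α → Prop} {S : Set α}
    (hp : ∀ x, p x → x ∈ S) {N : ℕ} (h : classCount S ≤ N) :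
    Finite (Quot fun x y : Subtype p ↦ x.1 ≈ y.1) ∧
      Nat.card (Quot fun x y : Subtype p ↦ x.1 ≈ y.1) ≤ N := by
  have hfin : (Quotient.mk ‹Setoid α› '' S).Finite := Set.finite_of_encard_le_coe h
  have := hfin.to_subtype
  let φ : (Quot fun x y : Subtype p ↦ x.1 ≈ y.1) → (Quotient.mk ‹Setoid α› '' S) :=
    Quot.lift (fun x ↦ ⟨⟦x.1⟧, x.1, hp _ x.2, rfl⟩) fun _ _ hxy ↦ Subtype.ext (Quotient.sound hxy)
  have hφ : φ.Injective := by
    rintro ⟨x⟩ ⟨y⟩ hxy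
    exact Quot.sound (Quotient.exact (congrArg Subtype.val hxy))
  refine ⟨Finite.of_injective φ hφ, (Nat.card_le_card_of_injective φ hφ).trans ?_⟩
  rw [Nat.card_coe_set_eq]
  exact_mod_cast hfin.cast_ncard_eq.trans_le h

theorem exists_nat_le_pow_and_le_rpow {X : ℝ} (hX : 1 ≤ X) {n : ℕ} (hn : n ≠ 0) :
    ∃ K : ℕ, 1 ≤ K ∧ X ≤ (K : ℝ) ^ n ∧ (K : ℝ) ≤ 2 * X ^ (n : ℝ)⁻¹ := by
  have hroot : 1 ≤ X ^ (n : ℝ)⁻¹ := Real.one_le_rpow hX (by positivity)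
  refine ⟨⌈X ^ (n : ℝ)⁻¹⌉₊, Nat.one_le_ceil_iff.2 (by linarith), ?_,
    Nat.ceil_le_two_mul (by linarith)⟩
  calc X = (X ^ (n : ℝ)⁻¹) ^ n := (Real.rpow_inv_natCast_pow (by linarith) hn).symm
    _ ≤ (⌈X ^ (n : ℝ)⁻¹⌉₊ : ℝ) ^ n := by gcongr; exact Nat.le_ceil _

theorem mem_boundedStabForms_of_height_lt {f : BQ ℤ} {X : ℝ} {K : ℕ} (hX : X ≤ K ^ 6)
    (hdisc : f.disc ≠ 0) (hf : f.height < X) (hstab : NontrivialStab f) :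
    f ∈ boundedStabForms K := by
  obtain ⟨hI, hJ⟩ := max_lt_iff.1 (hf.trans_le hX)
  refine ⟨hdisc, hstab, ?_, ?_⟩
  · have hI : |(f.invI : ℝ)| ≤ K ^ 2 :=
      (lt_of_pow_lt_pow_left₀ 3 (by positivity) (hI.trans_eq (by ring))).le
    exact_mod_cast hI
  · have hJ : |(f.invJ : ℝ)| ≤ 2 * K ^ 3 := abs_le_of_sq_le_sq (by linarith) (by positivity)
    exact_mod_cast hJ

end Asymptotics

/-- The number of `GL₂(ℤ)`-orbits of integral binary quartic forms
with `Δ(f) ≠ 0`, `H(f) < X` and nontrivial stabiliser in `PGL₂(ℚ)` is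
`O_ε(X^{2/3+ε})`. -/
theorem nontrivial_stabiliser_count :
    ∀ ε > (0 : ℝ), ∃ C > (0 : ℝ), ∀ X : ℝ, 1 ≤ X →
      Finite (Quot (stabFormsRel X)) ∧
      (Nat.card (Quot (stabFormsRel X)) : ℝ) ≤ C * X ^ ((2 : ℝ) / 3 + ε) := by
  intro ε hε
  obtain ⟨C, hC, hcount⟩ := exists_classCount_boundedStabForms_le (ε := 6 * ε) (by positivity)
  refine ⟨C * 2 ^ (4 + 6 * ε), by positivity, fun X hX ↦ ?_⟩
  obtain ⟨K, hK, hXK, hKX⟩ := exists_nat_le_pow_and_le_rpow hX (n := 6) (by norm_num)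
  obtain ⟨N, hN, hNK⟩ := hcount K hK
  obtain ⟨hfin, hcard⟩ := finite_and_card_quot_le_of_classCount_le
    (p := fun f ↦ f.disc ≠ 0 ∧ f.height < X ∧ NontrivialStab f)
    (fun f ⟨hdisc, hf, hstab⟩ ↦ mem_boundedStabForms_of_height_lt hXK hdisc hf hstab) hN
  refine ⟨hfin, (Nat.cast_le.2 hcard).trans (hNK.trans ?_)⟩
  calc C * (K : ℝ) ^ (4 + 6 * ε) ≤ C * (2 * X ^ ((6 : ℕ) : ℝ)⁻¹) ^ (4 + 6 * ε) := by gcongr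
    _ = C * 2 ^ (4 + 6 * ε) * X ^ (2 / 3 + ε) := by
        rw [Real.mul_rpow two_pos.le (by positivity), ← mul_assoc, ← Real.rpow_mul (by positivity)]
        push_cast
        ring_nf

end BQPaper
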